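/- arXiv:1812.03031 — 5 statements merged into one kernel-verified Lean document; each statement's English description precedes it below -/
import Mathlib

section
/- For any 0 < β ≤ 1, there exists a joint distribution P_{XY} with |𝒳| = 2 and I(X;Y) ≥ β such that for every positive integer M, I(X;[Y]_M) ≤ 2M · β / ln( e·log(e) / (2β) ). -/
/-!
Let `X` be a fair bit and write `T = P(X = 0 | Y) - P(X = 1 | Y)`.  Then
`I(X; Y) = E[G(T)] / ln 2` with `G(s) = ((1+s) ln(1+s) + (1-s) ln(1-s)) / 2`, and a quantizer cell
`A` contributes `P(A) G(E[T | A]) / ln 2`.  The distribution is chosen symmetric with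
`P(T ≥ t) ≤ a / t²`: near `0` one has `G(s) ≈ s² / 2`, so every scale of `T` carries the same amount
of information, and a single cell can only collect what one scale carries.

Concretely, with a ratio `r` close to `1`, `T` takes the values `± r ^ k` for `k ≤ n`, with
`P(T ≥ r ^ k) = a r ^ (-2k)`; the remaining mass is put at `T = 0`.

* Lower bound: since `G(s) ≥ s² / 2` and `G(1) = ln 2`, the information is at least
  `(2 a ln 2 + n a (1 - r²)) / ln 2` (`sum_tailW_mul_gFun`).
* Upper bound: `E (T - τ)⁺ ≤ a (1/τ - 1)` for `0 < τ ≤ 1` (`sum_tailW_pos_part`), hence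
  `|E[T; A]| ≤ τ P(A) + a (1/τ - 1)`.  Taking `τ = √(a / P(A))` bounds `|E[T | A]|` by `2τ - τ²`,
  and `G(m) ≤ m²/2 + m³/4` turns this into `P(A) G(E[T | A]) ≤ 2a` (`cellInfo_le`).  So `M` cells
  have information at most `2 a M / ln 2`.

With `b = 2 β ln 2` and `L = 1 - ln b`, the logarithm in the claim is `L`, and one takes
`a = b / (2L)`, `r² = 1 - (L - 1) / n`.  The total mass is at most one because
`(1 - (L-1)/n)^n → exp (1 - L) = b > b / L`.  When `b ≥ 1`, the choice `Y = X` (`n = 0`, `a = 1/2`)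
works.
-/

open scoped BigOperators

/-- Mutual information (in bits) of a joint probability mass function `p` on `𝒳 × 𝒴`,
with the convention `0 · log 0 = 0`. -/
noncomputable def miBits {𝒳 𝒴 : Type*} (p : 𝒳 → 𝒴 → ℝ) : ℝ :=
  ∑' x, ∑' y, p x y * Real.logb 2 (p x y / ((∑' y', p x y') * (∑' x', p x' y)))

/-- `p` is a joint probability mass function. -/
def IsJointPMF {𝒳 𝒴 : Type*} (p : 𝒳 → 𝒴 → ℝ) : Prop :=
  (∀ x y, 0 ≤ p x y) ∧ Summable (fun xy : 𝒳 × 𝒴 => p xy.1 xy.2) ∧ (∑' x, ∑' y, p x y) = 1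

/-- Joint pmf of `(X, f(Y))` when `(X,Y) ~ p` and `f` is a deterministic `M`-level quantizer. -/
noncomputable def quantJoint {𝒳 𝒴 : Type*} (p : 𝒳 → 𝒴 → ℝ) {M : ℕ} (f : 𝒴 → Fin M) :
    𝒳 → Fin M → ℝ :=
  fun x m => ∑' y, if f y = m then p x y else 0

/-- `I(X;[Y]_M)`: the best mutual information achievable by a deterministic `M`-level
quantizer of `Y`. -/
noncomputable def quantMI {𝒳 𝒴 : Type*} (p : 𝒳 → 𝒴 → ℝ) (M : ℕ) : ℝ :=
  ⨆ f : 𝒴 → Fin M, miBits (quantJoint p f)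

/-- The information distillation function `ID_M(K, β)`. -/
noncomputable def ID (M K : ℕ) (β : ℝ) : ℝ :=
  sInf {v | ∃ p : Fin K → ℕ → ℝ, IsJointPMF p ∧ β ≤ miBits p ∧ v = quantMI p M}

/-- Binary entropy function (bits). -/
noncomputable def hBin (t : ℝ) : ℝ :=
  -(t * Real.logb 2 t) - (1 - t) * Real.logb 2 (1 - t)

/-! ### The function `G` -/

/-- The divergence, in nats, of the law `((1+s)/2, (1-s)/2)` from the uniform law on two points. -/
noncomputable def gFun (s : ℝ) : ℝ :=
  ((1 + s) * Real.log (1 + s) + (1 - s) * Real.log (1 - s)) / 2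

lemma gFun_neg (s : ℝ) : gFun (-s) = gFun s := by
  unfold gFun
  rw [show 1 + -s = 1 - s by ring, show 1 - -s = 1 + s by ring]
  ring

lemma gFun_abs (s : ℝ) : gFun |s| = gFun s := by
  rcases abs_choice s with h | h <;> rw [h]
  exact gFun_neg s

lemma gFun_one : gFun 1 = Real.log 2 := by
  unfold gFun
  norm_num

/-- The derivative of `G` is `artanh`, which dominates the identity on `[0, 1)`. -/
lemma sq_half_le_gFun {s : ℝ} (h0 : 0 ≤ s) (h1 : s ≤ 1) : s ^ 2 / 2 ≤ gFun s := by
  have hmono : MonotoneOn (fun x : ℝ => gFun x - x ^ 2 / 2) (Set.Icc 0 1) := by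
    apply monotoneOn_of_hasDerivWithinAt_nonneg (convex_Icc 0 1)
      (f' := fun x => (Real.log (1 + x) - Real.log (1 - x)) / 2 - x)
    · have h2 : Continuous fun x : ℝ => (1 + x) * Real.log (1 + x) :=
        Real.continuous_mul_log.comp (continuous_const.add continuous_id)
      have h3 : Continuous fun x : ℝ => (1 - x) * Real.log (1 - x) :=
        Real.continuous_mul_log.comp (continuous_const.sub continuous_id)
      unfold gFun
      exact (((h2.add h3).div_const 2).sub (by fun_prop)).continuousOn
    · intro x hx
      rw [interior_Icc] at hx
      obtain ⟨hx0, hx1⟩ := hx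
      have h2 : HasDerivAt (fun y : ℝ => 1 + y) 1 x := (hasDerivAt_id x).const_add 1
      have h3 : HasDerivAt (fun y : ℝ => 1 - y) (-1) x := (hasDerivAt_id x).const_sub 1
      have h4 := (Real.hasDerivAt_mul_log (x := 1 + x) (by linarith)).comp x h2
      have h5 := (Real.hasDerivAt_mul_log (x := 1 - x) (by linarith)).comp x h3
      have h6 := ((h4.add h5).div_const 2).sub (((hasDerivAt_id x).pow 2).div_const 2)
      refine (HasDerivAt.congr_deriv h6 ?_).hasDerivWithinAt
      simp
      ring
    · intro x hx
      rw [interior_Icc] at hx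
      obtain ⟨hx0, hx1⟩ := hx
      have h1x : 0 < 1 - x := by linarith
      have h := Real.le_log_one_add_of_nonneg (x := 2 * x / (1 - x)) (by positivity)
      have e1 : 1 + 2 * x / (1 - x) = (1 + x) / (1 - x) := by field_simp; ring
      have e2 : 2 * (2 * x / (1 - x)) / (2 * x / (1 - x) + 2) = 2 * x := by
        rw [show 2 * x / (1 - x) + 2 = 2 / (1 - x) by field_simp; ring]
        field_simp
      rw [e1, e2, Real.log_div (by linarith) h1x.ne'] at h
      linarith
  have h := hmono (Set.left_mem_Icc.2 zero_le_one) ⟨h0, h1⟩ h0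
  have hz : gFun 0 = 0 := by simp [gFun]
  simp only [hz] at h
  linarith

lemma gFun_le {m : ℝ} (h0 : 0 ≤ m) (h1 : m ≤ 1) : gFun m ≤ m ^ 2 / 2 + m ^ 3 / 4 := by
  have hA : (1 + m) * Real.log (1 + m) ≤ m + m ^ 2 / 2 := by
    have hp : 0 < 1 + m := by linarith
    -- `log y ≤ sinh (log y) = (y - 1/y) / 2`
    have h := Real.self_le_sinh_iff.2 (Real.log_nonneg (by linarith : 1 ≤ 1 + m))
    rw [Real.sinh_log hp] at h
    calc (1 + m) * Real.log (1 + m) ≤ (1 + m) * ((1 + m - (1 + m)⁻¹) / 2) := by gcongr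
      _ = m + m ^ 2 / 2 := by field_simp; ring
  have hB : (1 - m) * Real.log (1 - m) ≤ -m + m ^ 2 / 2 + m ^ 3 / 2 := by
    rcases h1.lt_or_eq with hlt | rfl
    · have hs := Real.hasSum_pow_div_log_of_abs_lt_one (x := m) (by rwa [abs_of_nonneg h0])
      have h := sum_le_hasSum (Finset.range 2) (fun i _ => by positivity) hs
      norm_num [Finset.sum_range_succ] at h
      have h2 : (1 - m) * Real.log (1 - m) ≤ (1 - m) * (-(m + m ^ 2 / 2)) := by
        apply mul_le_mul_of_nonneg_left _ (by linarith)
        linarith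
      linarith
    · norm_num
  unfold gFun
  linarith

/-! ### Mutual information with a fair bit -/

/-- The contribution, in bits, of a symbol of probability `P` at which `P(0, y) - P(1, y) = U`. -/
noncomputable def cellInfo (P U : ℝ) : ℝ := P * gFun (U / P) / Real.log 2

/-- The joint mass function with `p 0 y + p 1 y = P y` and `p 0 y - p 1 y = U y`. -/
noncomputable def jointOf {α : Type*} (P U : α → ℝ) : Fin 2 → α → ℝ :=
  fun x y => (P y + (if x = 0 then 1 else -1) * U y) / 2

lemma tsum_jointOf {α : Type*} {P U : α → ℝ} (S : Finset α) (hP : ∀ y ∉ S, P y = 0)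
    (hU : ∀ y ∉ S, U y = 0) (hP1 : ∑ y ∈ S, P y = 1) (hU0 : ∑ y ∈ S, U y = 0) (x : Fin 2) :
    ∑' y, jointOf P U x y = 1 / 2 := by
  rw [tsum_eq_sum (s := S) (fun y hy => by simp [jointOf, hP y hy, hU y hy])]
  simp only [jointOf]
  rw [← Finset.sum_div, Finset.sum_add_distrib, ← Finset.mul_sum, hP1, hU0]
  simp

/-- For `P = 0` the side condition `|U| ≤ P` makes both sides vanish. -/
lemma cell_identity {P U : ℝ} (hU : |U| ≤ P) :
    (P + U) / 2 * Real.logb 2 ((P + U) / 2 / (1 / 2 * P)) +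
      (P - U) / 2 * Real.logb 2 ((P - U) / 2 / (1 / 2 * P)) = cellInfo P U := by
  rcases (abs_nonneg U |>.trans hU).eq_or_lt with h | h
  · subst h
    have : U = 0 := by simpa using hU
    simp [this, cellInfo]
  · have e1 : (P + U) / 2 / (1 / 2 * P) = 1 + U / P := by field_simp
    have e2 : (P - U) / 2 / (1 / 2 * P) = 1 - U / P := by field_simp
    have e3 : P + U = P * (1 + U / P) := by field_simp
    have e4 : P - U = P * (1 - U / P) := by field_simp
    rw [e1, e2, e3, e4]
    simp only [cellInfo, gFun, Real.logb]
    ring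

lemma miBits_jointOf {α : Type*} {P U : α → ℝ} (S : Finset α) (hP : ∀ y ∉ S, P y = 0)
    (hUP : ∀ y, |U y| ≤ P y) (hP1 : ∑ y ∈ S, P y = 1) (hU0 : ∑ y ∈ S, U y = 0) :
    miBits (jointOf P U) = ∑ y ∈ S, cellInfo (P y) (U y) := by
  have hU : ∀ y ∉ S, U y = 0 := fun y hy => by
    have := hUP y
    rw [hP y hy] at this
    simpa using this
  have hmarg : ∀ y, ∑' x, jointOf P U x y = P y := fun y => by
    rw [tsum_fintype, Fin.sum_univ_two]
    simp [jointOf]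
    ring
  unfold miBits
  simp only [tsum_jointOf S hP hU hP1 hU0, hmarg]
  rw [tsum_fintype, Fin.sum_univ_two,
    tsum_eq_sum (s := S) (fun y hy => by simp [jointOf, hP y hy, hU y hy]),
    tsum_eq_sum (s := S) (fun y hy => by simp [jointOf, hP y hy, hU y hy]),
    ← Finset.sum_add_distrib]
  refine Finset.sum_congr rfl fun y _ => ?_
  rw [← cell_identity (hUP y)]
  simp [jointOf, sub_eq_add_neg]

lemma isJointPMF_jointOf {P U : ℕ → ℝ} (S : Finset ℕ) (hP : ∀ y ∉ S, P y = 0)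
    (hUP : ∀ y, |U y| ≤ P y) (hP1 : ∑ y ∈ S, P y = 1) (hU0 : ∑ y ∈ S, U y = 0) :
    IsJointPMF (jointOf P U) := by
  have hU : ∀ y ∉ S, U y = 0 := fun y hy => by
    have := hUP y
    rw [hP y hy] at this
    simpa using this
  refine ⟨fun x y => ?_, ?_, ?_⟩
  · have := abs_le.1 (hUP y)
    unfold jointOf
    split_ifs <;> linarith
  · apply summable_of_ne_finset_zero (s := Finset.univ ×ˢ S)
    rintro ⟨x, y⟩ hy
    have hy : y ∉ S := by simpa using hy
    simp [jointOf, hP y hy, hU y hy]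
  · simp only [tsum_jointOf S hP hU hP1 hU0]
    rw [tsum_fintype, Fin.sum_univ_two]
    norm_num

lemma quantJoint_jointOf {P U : ℕ → ℝ} (S : Finset ℕ) (hP : ∀ y ∉ S, P y = 0)
    (hU : ∀ y ∉ S, U y = 0) {M : ℕ} (f : ℕ → Fin M) :
    quantJoint (jointOf P U) f =
      jointOf (fun m => ∑ y ∈ S with f y = m, P y) (fun m => ∑ y ∈ S with f y = m, U y) := by
  funext x m
  unfold quantJoint
  rw [tsum_eq_sum (s := S) (fun y hy => by simp [jointOf, hP y hy, hU y hy]), ← Finset.sum_filter]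
  simp only [jointOf]
  rw [← Finset.sum_div, Finset.sum_add_distrib, ← Finset.mul_sum]

/-- A cell whose signed mass obeys the truncation bound at every threshold `τ` carries at most
`2a` nats.  The relevant threshold is `τ = √(a / P)`. -/
lemma cellInfo_le {P U a : ℝ} (ha : 0 < a) (hU : |U| ≤ P)
    (h : ∀ τ, 0 < τ → τ ≤ 1 → |U| ≤ τ * P + a * (1 / τ - 1)) :
    cellInfo P U ≤ 2 * a / Real.log 2 := by
  have hl : 0 < Real.log 2 := Real.log_pos (by norm_num)
  unfold cellInfo
  refine div_le_div_of_nonneg_right ?_ hl.le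
  rcases (abs_nonneg U |>.trans hU).eq_or_lt with hP | hP
  · rw [← hP]; simp; exact ha.le
  rw [← gFun_abs, abs_div, abs_of_pos hP]
  set m := |U| / P with hm
  have hm0 : 0 ≤ m := by positivity
  have hm1 : m ≤ 1 := (div_le_one hP).2 hU
  have hg := gFun_le hm0 hm1
  rcases le_total P a with hPa | hPa
  · have : gFun m ≤ 2 := by
      have h2 : m ^ 2 ≤ 1 := pow_le_one₀ hm0 hm1
      have h3 : m ^ 3 ≤ 1 := pow_le_one₀ hm0 hm1
      linarith
    calc P * gFun m ≤ P * 2 := by gcongr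
      _ ≤ 2 * a := by linarith
  · set τ := Real.sqrt (a / P) with hτ
    have hτ0 : 0 < τ := Real.sqrt_pos.2 (by positivity)
    have hτ1 : τ ≤ 1 := Real.sqrt_le_one.2 ((div_le_one hP).2 hPa)
    have hsq : τ ^ 2 = a / P := Real.sq_sqrt (by positivity)
    have haP : a = τ ^ 2 * P := by rw [hsq]; field_simp
    have hmτ : m ≤ 2 * τ - τ ^ 2 := by
      rw [hm, div_le_iff₀ hP]
      refine (h τ hτ0 hτ1).trans (le_of_eq ?_)
      rw [haP]
      field_simp
      ring
    have hb : m ^ 2 / 2 + m ^ 3 / 4 ≤ 2 * τ ^ 2 := by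
      calc m ^ 2 / 2 + m ^ 3 / 4
          ≤ (2 * τ - τ ^ 2) ^ 2 / 2 + (2 * τ - τ ^ 2) ^ 3 / 4 := by gcongr
        _ = 2 * τ ^ 2 - τ ^ 4 * (5 - 3 * τ + τ ^ 2 / 2) / 2 := by ring
        _ ≤ 2 * τ ^ 2 := by
          have : 0 ≤ τ ^ 4 * (5 - 3 * τ + τ ^ 2 / 2) / 2 := by
            have : 0 ≤ 5 - 3 * τ + τ ^ 2 / 2 := by nlinarith
            positivity
          linarith
    calc P * gFun m ≤ P * (2 * τ ^ 2) := by gcongr; linarith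
      _ = 2 * a := by rw [haP]; ring

/-! ### Symmetric distributions -/

lemma sum_range_two_mul' (F : ℕ → ℝ) (K : ℕ) :
    ∑ y ∈ Finset.range (2 * K), F y = ∑ k ∈ Finset.range K, (F (2 * k) + F (2 * k + 1)) := by
  induction K with
  | zero => simp
  | succ K ih =>
    rw [show 2 * (K + 1) = 2 * K + 1 + 1 by ring, Finset.sum_range_succ, Finset.sum_range_succ, ih,
      Finset.sum_range_succ]
    ring

/-- Properties of the law with masses `w k` at each of `T = t k` and `T = -t k`.  The symbol `2k`
carries the value `t k` and the symbol `2k + 1` the value `-t k`. -/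
lemma symmetric_bound (w t : ℕ → ℝ) (K : ℕ) (a : ℝ) (ha : 0 < a) (hw : ∀ k < K, 0 ≤ w k)
    (ht0 : ∀ k, 0 ≤ t k) (ht1 : ∀ k, t k ≤ 1) (hw1 : ∑ k ∈ Finset.range K, w k = 1 / 2)
    (htail : ∀ τ, 0 < τ → τ ≤ 1 →
      ∑ k ∈ Finset.range K, w k * max (t k - τ) 0 ≤ a * (1 / τ - 1)) :
    ∃ p : Fin 2 → ℕ → ℝ, IsJointPMF p ∧
      miBits p = 2 * (∑ k ∈ Finset.range K, w k * gFun (t k)) / Real.log 2 ∧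
      ∀ M : ℕ, 0 < M → quantMI p M ≤ M * (2 * a / Real.log 2) := by
  set S := Finset.range (2 * K) with hS
  let P : ℕ → ℝ := fun y => if y < 2 * K then w (y / 2) else 0
  let s : ℕ → ℝ := fun y => (if y % 2 = 0 then 1 else -1) * t (y / 2)
  let U : ℕ → ℝ := fun y => P y * s y
  have hsum : ∀ F : ℝ → ℝ → ℝ, ∑ y ∈ S, F (P y) (s y) =
      ∑ k ∈ Finset.range K, (F (w k) (t k) + F (w k) (-t k)) := by
    intro F
    rw [hS, sum_range_two_mul']
    refine Finset.sum_congr rfl fun k hk => ?_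
    have hk := Finset.mem_range.1 hk
    have e1 : P (2 * k) = w k := by
      simp only [P]; rw [if_pos (by omega), show 2 * k / 2 = k by omega]
    have e2 : P (2 * k + 1) = w k := by
      simp only [P]; rw [if_pos (by omega), show (2 * k + 1) / 2 = k by omega]
    have e3 : s (2 * k) = t k := by
      simp only [s]; rw [if_pos (by omega), show 2 * k / 2 = k by omega, one_mul]
    have e4 : s (2 * k + 1) = -t k := by
      simp only [s]; rw [if_neg (by omega), show (2 * k + 1) / 2 = k by omega]; ring
    rw [e1, e2, e3, e4]
  have hP0 : ∀ y, 0 ≤ P y := by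
    intro y
    simp only [P]
    split_ifs with h
    · exact hw _ (by omega)
    · exact le_rfl
  have hs1 : ∀ y, |s y| ≤ 1 := by
    intro y
    simp only [s, abs_mul, abs_of_nonneg (ht0 _)]
    split_ifs <;> simp [ht1]
  have hP : ∀ y ∉ S, P y = 0 := by
    intro y hy
    simp only [P]
    rw [if_neg (by simpa [hS] using hy)]
  have hU : ∀ y ∉ S, U y = 0 := fun y hy => by simp only [U, hP y hy, zero_mul]
  have hUP : ∀ y, |U y| ≤ P y := by
    intro y
    simp only [U, abs_mul, abs_of_nonneg (hP0 y)]
    exact mul_le_of_le_one_right (hP0 y) (hs1 y)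
  have hP1 : ∑ y ∈ S, P y = 1 := by
    rw [hsum (fun p _ => p), Finset.sum_add_distrib, hw1]; norm_num
  have hU0 : ∑ y ∈ S, U y = 0 := by
    simp only [U]
    rw [hsum (fun p q => p * q)]
    simp
  -- Both one-sided truncated means of `T` are controlled by the hypothesis on `t`.
  have htr : ∀ σ : ℝ, σ = 1 ∨ σ = -1 → ∀ τ, 0 < τ → τ ≤ 1 →
      ∑ y ∈ S, P y * max (σ * s y - τ) 0 ≤ a * (1 / τ - 1) := by
    intro σ hσ τ h0 h1
    rw [hsum (fun p q => p * max (σ * q - τ) 0)]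
    refine le_trans (le_of_eq (Finset.sum_congr rfl fun k _ => ?_)) (htail τ h0 h1)
    have hz : max (-t k - τ) 0 = 0 := max_eq_right (by linarith [ht0 k])
    rcases hσ with rfl | rfl <;> simp [hz]
  refine ⟨jointOf P U, isJointPMF_jointOf S hP hUP hP1 hU0, ?_, ?_⟩
  · rw [miBits_jointOf S hP hUP hP1 hU0]
    have hc : ∀ y, cellInfo (P y) (U y) = P y * gFun (s y) / Real.log 2 := by
      intro y
      simp only [cellInfo, U]
      rcases eq_or_ne (P y) 0 with h | h
      · simp [h]
      · rw [mul_div_cancel_left₀ _ h]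
    simp only [hc]
    rw [hsum (fun p q => p * gFun q / Real.log 2), mul_div_assoc, Finset.sum_div, Finset.mul_sum]
    refine Finset.sum_congr rfl fun k _ => ?_
    rw [gFun_neg]
    ring
  · intro M hM
    have : Nonempty (Fin M) := ⟨⟨0, hM⟩⟩
    refine ciSup_le fun f => ?_
    have hcell : ∀ m : Fin M, |∑ y ∈ S with f y = m, U y| ≤ ∑ y ∈ S with f y = m, P y :=
      fun m => (Finset.abs_sum_le_sum_abs _ _).trans (Finset.sum_le_sum fun y _ => hUP y)
    rw [quantJoint_jointOf S hP hU f, miBits_jointOf Finset.univ (by simp) hcell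
      (by rw [Finset.sum_fiberwise]; exact hP1) (by rw [Finset.sum_fiberwise]; exact hU0)]
    have hle : ∀ m ∈ (Finset.univ : Finset (Fin M)),
        cellInfo (∑ y ∈ S with f y = m, P y) (∑ y ∈ S with f y = m, U y)
          ≤ 2 * a / Real.log 2 := by
      intro m _
      refine cellInfo_le ha (hcell m) fun τ h0 h1 => ?_
      have key : ∀ σ : ℝ, σ = 1 ∨ σ = -1 → σ * ∑ y ∈ S with f y = m, U y ≤
          τ * (∑ y ∈ S with f y = m, P y) + a * (1 / τ - 1) := by
        intro σ hσ
        calc σ * ∑ y ∈ S with f y = m, U y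
            ≤ ∑ y ∈ S with f y = m, (τ * P y + P y * max (σ * s y - τ) 0) := by
              rw [Finset.mul_sum]
              refine Finset.sum_le_sum fun y _ => ?_
              have h2 := mul_le_mul_of_nonneg_left (le_max_left (σ * s y - τ) 0) (hP0 y)
              simp only [U]
              linarith
          _ = τ * (∑ y ∈ S with f y = m, P y) +
                ∑ y ∈ S with f y = m, P y * max (σ * s y - τ) 0 := by
              rw [Finset.sum_add_distrib, Finset.mul_sum]
          _ ≤ τ * (∑ y ∈ S with f y = m, P y) + ∑ y ∈ S, P y * max (σ * s y - τ) 0 := by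
              refine add_le_add le_rfl ?_
              exact Finset.sum_le_sum_of_subset_of_nonneg (Finset.filter_subset _ _)
                fun y _ _ => mul_nonneg (hP0 y) (le_max_right _ _)
          _ ≤ _ := by gcongr; exact htr σ hσ τ h0 h1
      have k1 := key 1 (Or.inl rfl)
      have k2 := key (-1) (Or.inr rfl)
      exact abs_le.2 ⟨by linarith, by linarith⟩
    refine (Finset.sum_le_sum hle).trans (le_of_eq ?_)
    simp

/-! ### The geometric weights -/

/-- Masses `w k` at the points `r ^ k` for which the upper tail at `r ^ k` is `a r ^ (-2k)`. -/
noncomputable def tailW (a r : ℝ) : ℕ → ℝ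
  | 0 => a
  | k + 1 => a * (r⁻¹ ^ (2 * (k + 1)) - r⁻¹ ^ (2 * k))

lemma sum_tailW (a r : ℝ) (n : ℕ) :
    ∑ k ∈ Finset.range (n + 1), tailW a r k = a * r⁻¹ ^ (2 * n) := by
  induction n with
  | zero => simp [tailW]
  | succ n ih => rw [Finset.sum_range_succ, ih, tailW]; ring

lemma tailW_nonneg {a r : ℝ} (ha : 0 < a) (hr0 : 0 < r) (hr1 : r ≤ 1) (k : ℕ) :
    0 ≤ tailW a r k := by
  cases k with
  | zero => exact ha.le
  | succ k =>
    refine mul_nonneg ha.le (sub_nonneg.2 ?_)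
    exact pow_le_pow_right₀ ((one_le_inv₀ hr0).2 hr1) (by omega)

lemma sum_tailW_mul {a r : ℝ} (hr0 : 0 < r) (n : ℕ) :
    ∑ k ∈ Finset.range (n + 1), tailW a r k * r ^ k = a + a * (1 + r) * (r⁻¹ ^ n - 1) := by
  induction n with
  | zero => simp [tailW]
  | succ n ih =>
    rw [Finset.sum_range_succ, ih, tailW, inv_pow, inv_pow, inv_pow, inv_pow]
    have : r ≠ 0 := hr0.ne'
    field_simp
    ring

/-- The truncated first moment obeys the bound `∫_τ^1 a / t² dt` of the continuous tail. -/
lemma sum_tailW_pos_part {a r τ : ℝ} (ha : 0 < a) (hr0 : 0 < r) (hr1 : r ≤ 1) (h0 : 0 < τ)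
    (h1 : τ ≤ 1) (n : ℕ) :
    ∑ k ∈ Finset.range (n + 1), tailW a r k * max (r ^ k - τ) 0 ≤ a * (1 / τ - 1) := by
  induction n with
  | zero =>
    have h2 : max (1 - τ) 0 = 1 - τ := max_eq_left (by linarith)
    have h3 : 2 ≤ 1 / τ + τ := by
      have : 1 / τ + τ - 2 = (1 - τ) ^ 2 / τ := by field_simp; ring
      have : 0 ≤ (1 - τ) ^ 2 / τ := by positivity
      linarith
    simp only [zero_add, Finset.sum_range_one, tailW, pow_zero, h2]
    exact mul_le_mul_of_nonneg_left (by linarith) ha.le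
  | succ n ih =>
    rcases le_total (r ^ (n + 1)) τ with h | h
    · rw [Finset.sum_range_succ, max_eq_right (sub_nonpos.2 h), mul_zero, add_zero]
      exact ih
    · -- All points lie above the threshold, so the sum is linear in `τ`.
      have e : ∑ k ∈ Finset.range (n + 1 + 1), tailW a r k * max (r ^ k - τ) 0 =
          ∑ k ∈ Finset.range (n + 1 + 1), (tailW a r k * r ^ k - tailW a r k * τ) := by
        refine Finset.sum_congr rfl fun k hk => ?_
        have hk := Finset.mem_range.1 hk
        have : r ^ (n + 1) ≤ r ^ k := pow_le_pow_of_le_one hr0.le hr1 (by omega)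
        rw [max_eq_left (by linarith)]
        ring
      rw [e, Finset.sum_sub_distrib, ← Finset.sum_mul, sum_tailW_mul hr0, sum_tailW,
        show 2 * (n + 1) = (n + 1) * 2 by ring, pow_mul]
      set x := r⁻¹ ^ (n + 1)
      have hx : 1 ≤ x := one_le_pow₀ ((one_le_inv₀ hr0).2 hr1)
      have h2 : 2 * x - τ * x ^ 2 ≤ 1 / τ := by
        have : 1 / τ - (2 * x - τ * x ^ 2) = (1 - τ * x) ^ 2 / τ := by field_simp; ring
        have : 0 ≤ (1 - τ * x) ^ 2 / τ := by positivity
        linarith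
      have h3 : 1 + (1 + r) * (x - 1) - x ^ 2 * τ ≤ 1 / τ - 1 := by nlinarith
      calc a + a * (1 + r) * (x - 1) - a * x ^ 2 * τ
          = a * (1 + (1 + r) * (x - 1) - x ^ 2 * τ) := by ring
        _ ≤ _ := by gcongr

/-- Every scale `r ^ k` with `k ≥ 1` contributes at least `a (1 - r²) / 2`. -/
lemma sum_tailW_mul_gFun {a r : ℝ} (ha : 0 < a) (hr0 : 0 < r) (hr1 : r ≤ 1) (n : ℕ) :
    a * Real.log 2 + n * (a * (1 - r ^ 2) / 2) ≤
      ∑ k ∈ Finset.range (n + 1), tailW a r k * gFun (r ^ k) := by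
  induction n with
  | zero => simp [tailW, gFun_one]
  | succ n ih =>
    rw [Finset.sum_range_succ]
    have h1 := mul_le_mul_of_nonneg_left
      (sq_half_le_gFun (pow_nonneg hr0.le (n + 1)) (pow_le_one₀ hr0.le hr1))
      (tailW_nonneg ha hr0 hr1 (n + 1))
    have h2 : tailW a r (n + 1) * ((r ^ (n + 1)) ^ 2 / 2) = a * (1 - r ^ 2) / 2 := by
      rw [tailW, inv_pow, inv_pow]
      have : r ≠ 0 := hr0.ne'
      field_simp
      ring
    push_cast
    linarith

/-- The geometric law, completed to total mass one by an atom at `T = 0` (index `n + 1`). -/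
lemma geometric_law {a r : ℝ} (ha : 0 < a) (hr0 : 0 < r) (hr1 : r ≤ 1) (n : ℕ)
    (hmass : a * r⁻¹ ^ (2 * n) ≤ 1 / 2) :
    ∃ p : Fin 2 → ℕ → ℝ, IsJointPMF p ∧
      2 * (a * Real.log 2 + n * (a * (1 - r ^ 2) / 2)) / Real.log 2 ≤ miBits p ∧
      ∀ M : ℕ, 0 < M → quantMI p M ≤ M * (2 * a / Real.log 2) := by
  let w : ℕ → ℝ := fun k => if k = n + 1 then 1 / 2 - a * r⁻¹ ^ (2 * n) else tailW a r k
  let t : ℕ → ℝ := fun k => if k = n + 1 then 0 else r ^ k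
  have hsum : ∀ F : ℝ → ℝ → ℝ, ∑ k ∈ Finset.range (n + 2), F (w k) (t k) =
      ∑ k ∈ Finset.range (n + 1), F (tailW a r k) (r ^ k) +
        F (1 / 2 - a * r⁻¹ ^ (2 * n)) 0 := by
    intro F
    rw [Finset.sum_range_succ]
    congr 1
    · refine Finset.sum_congr rfl fun k hk => ?_
      have hk : k ≠ n + 1 := (Finset.mem_range.1 hk).ne
      simp only [w, t, if_neg hk]
    · simp [w, t]
  obtain ⟨p, h1, h2, h3⟩ := symmetric_bound w t (n + 2) a ha
    (fun k _ => by
      simp only [w]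
      split_ifs
      · linarith
      · exact tailW_nonneg ha hr0 hr1 k)
    (fun k => by simp only [t]; split_ifs <;> positivity)
    (fun k => by
      simp only [t]
      split_ifs
      · exact zero_le_one
      · exact pow_le_one₀ hr0.le hr1)
    (by rw [hsum (fun p _ => p), sum_tailW]; ring)
    (fun τ h0 hτ1 => by
      rw [hsum (fun p q => p * max (q - τ) 0), max_eq_right (by linarith : (0 : ℝ) - τ ≤ 0),
        mul_zero, add_zero]
      exact sum_tailW_pos_part ha hr0 hr1 h0 hτ1 n)
  refine ⟨p, h1, ?_, h3⟩
  have hl : 0 < Real.log 2 := Real.log_pos (by norm_num)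
  have hz : gFun 0 = 0 := by simp [gFun]
  rw [h2, hsum (fun p q => p * gFun q), hz, mul_zero, add_zero]
  gcongr
  exact sum_tailW_mul_gFun ha hr0 hr1 n

/-- Theorem 5: for any `0 < β ≤ 1` there is a joint distribution with binary `X` and
`I(X;Y) ≥ β` for which every `M`-level quantizer satisfies
`I(X;[Y]_M) ≤ 2 M β / ln(e log(e) / (2β))`. -/
theorem binary_upper_bound (β : ℝ) (hβ0 : 0 < β) (hβ1 : β ≤ 1) :
    ∃ p : Fin 2 → ℕ → ℝ, IsJointPMF p ∧ β ≤ miBits p ∧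
      ∀ M : ℕ, 0 < M →
        quantMI p M ≤ 2 * (M : ℝ) * β /
          Real.log (Real.exp 1 * Real.logb 2 (Real.exp 1) / (2 * β)) := by
  have hl : 0 < Real.log 2 := Real.log_pos (by norm_num)
  have hl1 : (1 / 2 : ℝ) < Real.log 2 := by linarith [Real.log_two_gt_d9]
  have hl2 : Real.log 2 < 0.7 := by linarith [Real.log_two_lt_d9]
  set b := 2 * β * Real.log 2 with hb
  have hb0 : 0 < b := by positivity
  have hlog : Real.log (Real.exp 1 * Real.logb 2 (Real.exp 1) / (2 * β)) = 1 - Real.log b := by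
    rw [Real.logb, Real.log_exp,
      show Real.exp 1 * (1 / Real.log 2) / (2 * β) = Real.exp 1 / b by rw [hb]; field_simp,
      Real.log_div (Real.exp_pos 1).ne' hb0.ne', Real.log_exp]
  rw [hlog]
  set L := 1 - Real.log b with hL
  have hL0 : 0 < L := by
    have : Real.log b ≤ b - 1 := Real.log_le_sub_one_of_pos hb0
    have : b < 2 := by nlinarith
    linarith
  -- It suffices to find parameters of the geometric law.
  suffices h : ∃ (a r : ℝ) (n : ℕ), 0 < a ∧ 0 < r ∧ r ≤ 1 ∧ a * r⁻¹ ^ (2 * n) ≤ 1 / 2 ∧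
      b ≤ 4 * (a * Real.log 2 + n * (a * (1 - r ^ 2) / 2)) ∧ 2 * a * L ≤ b by
    obtain ⟨a, r, n, ha, hr0, hr1, hmass, hlow, hup⟩ := h
    obtain ⟨p, h1, h2, h3⟩ := geometric_law ha hr0 hr1 n hmass
    refine ⟨p, h1, le_trans ?_ h2, fun M hM => (h3 M hM).trans ?_⟩
    · rw [le_div_iff₀ hl]
      linarith
    · rw [le_div_iff₀ hL0]
      calc (M : ℝ) * (2 * a / Real.log 2) * L = M * (2 * a * L) / Real.log 2 := by ring
        _ ≤ M * b / Real.log 2 := by gcongr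
        _ = 2 * M * β := by rw [hb]; field_simp
  rcases le_or_gt 1 b with hb1 | hb1
  · refine ⟨1 / 2, 1, 0, by norm_num, one_pos, le_rfl, by norm_num, ?_, ?_⟩
    · norm_num
      nlinarith
    · have := Real.log_nonneg hb1
      linarith
  · have hL1 : 1 < L := by linarith [Real.log_neg hb0 hb1]
    have hcb : b / L < Real.exp (-(L - 1)) := by
      rw [show -(L - 1) = Real.log b by rw [hL]; ring, Real.exp_log hb0]
      exact div_lt_self hb0 hL1
    have hlim := Real.tendsto_one_add_div_pow_exp (-(L - 1))
    obtain ⟨n, hn, hnL⟩ := ((hlim.eventually (lt_mem_nhds hcb)).and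
      (tendsto_natCast_atTop_atTop.eventually (Filter.eventually_gt_atTop (L - 1)))).exists
    have hn0 : (0 : ℝ) < n := by linarith
    set ρ := 1 + -(L - 1) / (n : ℝ) with hρ
    have hq : (L - 1) / (n : ℝ) < 1 := (div_lt_one hn0).2 hnL
    have hq0 : 0 < (L - 1) / (n : ℝ) := div_pos (by linarith) hn0
    have hρ0 : 0 < ρ := by rw [hρ, neg_div]; linarith
    have hρ1 : ρ ≤ 1 := by rw [hρ, neg_div]; linarith
    have hsq : Real.sqrt ρ ^ 2 = ρ := Real.sq_sqrt hρ0.le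
    have hnρ : n * (1 - ρ) = L - 1 := by rw [hρ]; field_simp; ring
    refine ⟨b / (2 * L), Real.sqrt ρ, n, by positivity, Real.sqrt_pos.2 hρ0,
      Real.sqrt_le_one.2 hρ1, ?_, ?_, ?_⟩
    · rw [pow_mul, inv_pow, hsq, inv_pow, ← div_eq_mul_inv, div_le_iff₀ (by positivity)]
      have : b / (2 * L) = b / L / 2 := by field_simp
      linarith
    · rw [hsq]
      have e : 4 * (b / (2 * L) * Real.log 2 + n * (b / (2 * L) * (1 - ρ) / 2)) =
          b / L * (2 * Real.log 2 + n * (1 - ρ)) := by field_simp; ring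
      rw [e, hnρ]
      calc b = b / L * L := by field_simp
        _ ≤ _ := by gcongr; linarith
    · apply le_of_eq
      field_simp
end

section
/- Let X, Y be discrete random variables, let U be a random variable with values in a discrete set 𝒰 that is independent of the pair (X, Y), and let f : 𝒴 × 𝒰 → {1,...,M}. Then there exists u ∈ 𝒰 such that I(X; f(Y, u)) ≥ I(X; f(Y, U)); consequently, randomized quantizers cannot outperform the best deterministic quantizer: I(X; f(Y,U)) ≤ I(X;[Y]_M). -/
/-!
Write `W_u` for the joint pmf of `(X, f(Y,u))` and `W` for that of `(X, f(Y,U))`. By independence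
`W = ∑ u, μ u • W_u`, and all of these have the same `X`-marginal `a`. Mutual information is convex
in the channel, so some `W_u` has mutual information at least that of `W`.

Convexity is used through its supporting hyperplane at `W`: with `Q`, `Q_u` the second marginals
of `W`, `W_u` and `r x m = W x m / (a x * Q m)`, the inequality `log t ≥ 1 - 1/t` gives, if `μ u > 0`,
`∑ x, W_u x m * log (W_u x m / (a x * Q_u m)) ≥ ∑ x, W_u x m * log (r x m)` for each level `m`
(`QJoint.sum_ge_linear`). The `μ`-average of the right-hand side, summed over `m`, is exactly the
mutual information of `W`, so it cannot lie strictly above the mutual information of every `W_u`.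

Since `𝒳` may be infinite, the interchanges of sums need absolute convergence. It holds because the
quantizer has finitely many levels: with `w = W x m / a x ∈ [0,1]`, the summand is
`a x * (w * log w) - W x m * log (Q m)`, which is dominated by `a x + W x m * |log (Q m)|`.
The same decomposition bounds the mutual information uniformly over quantizers, so the supremum
defining `quantMI` is that of a bounded set.
-/

open scoped BigOperators

/-- `W` is a joint pmf on `𝒳 × Fin M` whose first marginal is `a`. -/
structure QJoint {𝒳 : Type*} {M : ℕ} (W : 𝒳 → Fin M → ℝ) (a : 𝒳 → ℝ) : Prop where
  nonneg : ∀ x m, 0 ≤ W x m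
  marg : ∀ x, ∑ m, W x m = a x
  summ : Summable a
  total : ∑' x, a x = 1

/-- The contribution of level `m` to the mutual information of `W`, in nats. -/
noncomputable def levelInfo {𝒳 : Type*} {M : ℕ} (W : 𝒳 → Fin M → ℝ) (a : 𝒳 → ℝ) (m : Fin M) : ℝ :=
  ∑' x, W x m * Real.log (W x m / (a x * ∑' x', W x' m))

namespace QJoint

variable {𝒳 : Type*} {M : ℕ} {W V : 𝒳 → Fin M → ℝ} {a : 𝒳 → ℝ}

lemma le_marg (h : QJoint W a) (x : 𝒳) (m : Fin M) : W x m ≤ a x := by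
  rw [← h.marg x]
  exact Finset.single_le_sum (fun i _ => h.nonneg x i) (Finset.mem_univ m)

lemma marg_nonneg (h : QJoint W a) (x : 𝒳) : 0 ≤ a x := by
  rw [← h.marg x]
  exact Finset.sum_nonneg (fun i _ => h.nonneg x i)

lemma summable_level (h : QJoint W a) (m : Fin M) : Summable (fun x => W x m) :=
  Summable.of_nonneg_of_le (fun x => h.nonneg x m) (fun x => h.le_marg x m) h.summ

lemma le_level (h : QJoint W a) (x : 𝒳) (m : Fin M) : W x m ≤ ∑' x', W x' m :=
  (h.summable_level m).le_tsum x (fun j _ => h.nonneg j m)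

lemma level_nonneg (h : QJoint W a) (m : Fin M) : 0 ≤ ∑' x', W x' m :=
  tsum_nonneg (fun x => h.nonneg x m)

lemma level_le_one (h : QJoint W a) (m : Fin M) : ∑' x', W x' m ≤ 1 := by
  rw [← h.total]
  exact (h.summable_level m).tsum_le_tsum (fun x => h.le_marg x m) h.summ

lemma term_eq (h : QJoint W a) (x : 𝒳) (m : Fin M) (hW : 0 < W x m) :
    W x m * Real.log (W x m / (a x * ∑' x', W x' m)) =
      a x * (Real.log (W x m / a x) * (W x m / a x)) - W x m * Real.log (∑' x', W x' m) := by
  have ha : 0 < a x := hW.trans_le (h.le_marg x m)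
  have hQ : 0 < ∑' x', W x' m := hW.trans_le (h.le_level x m)
  rw [← div_div, Real.log_div (div_pos hW ha).ne' hQ.ne']
  field_simp

lemma abs_term_le (h : QJoint W a) (x : 𝒳) (m : Fin M) :
    |W x m * Real.log (W x m / (a x * ∑' x', W x' m))| ≤
      a x + W x m * |Real.log (∑' x', W x' m)| := by
  rcases (h.nonneg x m).eq_or_lt with h0 | hW
  · rw [← h0]; simpa using h.marg_nonneg x
  have ha : 0 < a x := hW.trans_le (h.le_marg x m)
  rw [h.term_eq x m hW]
  refine (abs_sub _ _).trans ?_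
  rw [abs_mul, abs_mul (W x m), abs_of_pos ha, abs_of_pos hW]
  have := Real.abs_log_mul_self_lt (W x m / a x) (div_pos hW ha)
    ((div_le_one ha).2 (h.le_marg x m))
  nlinarith

lemma summable_term (h : QJoint W a) (m : Fin M) :
    Summable (fun x => W x m * Real.log (W x m / (a x * ∑' x', W x' m))) :=
  Summable.of_norm_bounded (h.summ.add ((h.summable_level m).mul_right _))
    (fun x => h.abs_term_le x m)

lemma levelInfo_le_one (h : QJoint W a) (m : Fin M) : levelInfo W a m ≤ 1 := by
  have h1 : levelInfo W a m ≤ ∑' x, W x m * (-Real.log (∑' x', W x' m)) := by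
    refine (h.summable_term m).tsum_le_tsum (fun x => ?_) ((h.summable_level m).mul_right _)
    rcases (h.nonneg x m).eq_or_lt with h0 | hW
    · rw [← h0]; simp
    have ha : 0 < a x := hW.trans_le (h.le_marg x m)
    rw [h.term_eq x m hW]
    have h2 := Real.log_nonpos (div_pos hW ha).le ((div_le_one ha).2 (h.le_marg x m))
    have h3 : a x * (Real.log (W x m / a x) * (W x m / a x)) ≤ 0 :=
      mul_nonpos_of_nonneg_of_nonpos ha.le
        (mul_nonpos_of_nonpos_of_nonneg h2 (div_pos hW ha).le)
    linarith
  rw [tsum_mul_right] at h1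
  rcases (h.level_nonneg m).eq_or_lt with h0 | hQ
  · rw [← h0] at h1; simp at h1; linarith
  · have := (abs_lt.1 (Real.abs_log_mul_self_lt _ hQ (h.level_le_one m))).1
    linarith

lemma miBits_eq (h : QJoint W a) : miBits W = (∑ m, levelInfo W a m) / Real.log 2 := by
  unfold miBits levelInfo
  rw [← Summable.tsum_finsetSum (fun m _ => h.summable_term m), ← tsum_div_const]
  refine tsum_congr (fun x => ?_)
  simp only [tsum_fintype, h.marg, Finset.sum_div, Real.logb, mul_div_assoc]

lemma miBits_le (h : QJoint W a) : miBits W ≤ M / Real.log 2 := by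
  rw [h.miBits_eq]
  have := Real.log_pos (one_lt_two)
  gcongr
  simpa using Finset.sum_le_sum (fun m (_ : m ∈ Finset.univ) => h.levelInfo_le_one m)

/-- If `c * V ≤ W` with `c > 0`, the log-likelihood ratio of `W` is integrable against `V`. -/
lemma summable_cross (hW : QJoint W a) (hV : QJoint V a) {c : ℝ} (hc : 0 < c)
    (hle : ∀ x m, c * V x m ≤ W x m) (m : Fin M) :
    Summable (fun x => V x m * Real.log (W x m / (a x * ∑' x', W x' m))) := by
  refine Summable.of_norm_bounded ((hW.summable_term m).abs.mul_left c⁻¹) (fun x => ?_)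
  rw [Real.norm_eq_abs, abs_mul, abs_mul, abs_of_nonneg (hV.nonneg x m),
    abs_of_nonneg (hW.nonneg x m), ← mul_assoc]
  gcongr
  rw [inv_mul_eq_div, le_div_iff₀ hc, mul_comm]
  exact hle x m

/-- The supporting hyperplane of the mutual information at `W`, level by level. -/
lemma sum_ge_linear (hW : QJoint W a) (hV : QJoint V a) {c : ℝ} (hc : 0 < c)
    (hle : ∀ x m, c * V x m ≤ W x m) (m : Fin M) :
    ∑' x, V x m * Real.log (W x m / (a x * ∑' x', W x' m)) ≤ levelInfo V a m := by
  set Q := ∑' x', W x' m with hQ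
  set R := ∑' x', V x' m with hR
  have hpt : ∀ x, V x m * Real.log (W x m / (a x * Q)) + (V x m - W x m * (R / Q)) ≤
      V x m * Real.log (V x m / (a x * R)) := by
    intro x
    rcases (hV.nonneg x m).eq_or_lt with h0 | hVx
    · rw [← h0]
      have : 0 ≤ W x m * (R / Q) :=
        mul_nonneg (hW.nonneg x m) (div_nonneg (hV.level_nonneg m) (hW.level_nonneg m))
      simpa using this
    have ha : 0 < a x := hVx.trans_le (hV.le_marg x m)
    have hR0 : 0 < R := hVx.trans_le (hV.le_level x m)
    have hWx : 0 < W x m := (mul_pos hc hVx).trans_le (hle x m)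
    have hQ0 : 0 < Q := hWx.trans_le (hW.le_level x m)
    have h1 := Real.one_sub_inv_le_log_of_pos
      (x := (V x m / (a x * R)) / (W x m / (a x * Q))) (by positivity)
    rw [Real.log_div (by positivity) (by positivity)] at h1
    have h2 := mul_le_mul_of_nonneg_left h1 hVx.le
    have h3 : V x m * (1 - ((V x m / (a x * R)) / (W x m / (a x * Q)))⁻¹) =
        V x m - W x m * (R / Q) := by
      field_simp
    linarith
  have s1 := hW.summable_cross hV hc hle m
  have s2 := (hV.summable_level m).sub ((hW.summable_level m).mul_right (R / Q))
  have key := (s1.add s2).tsum_le_tsum hpt (hV.summable_term m)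
  rw [s1.tsum_add s2, (hV.summable_level m).tsum_sub ((hW.summable_level m).mul_right _),
    tsum_mul_right, ← hQ, ← hR] at key
  -- The affine correction `R - Q * (R / Q)` vanishes, also when `Q = 0` since then `R = 0`.
  have hz : Q * (R / Q) = R := by
    by_cases hQ0 : Q = 0
    · have hcR : c * R ≤ Q := by
        rw [hR, hQ, ← tsum_mul_left]
        exact ((hV.summable_level m).mul_left c).tsum_le_tsum (fun x => hle x m)
          (hW.summable_level m)
      have hR0 : R = 0 := by
        have h4 : 0 ≤ R := hV.level_nonneg m
        nlinarith
      rw [hQ0, hR0]; simp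
    · field_simp
  rw [hz] at key
  unfold levelInfo
  linarith

/-- A mixture of joint pmfs with a common first marginal has mutual information at most that of
one of its components. -/
lemma exists_component {𝒰 : Type*} {μ : 𝒰 → ℝ} (hμ0 : ∀ u, 0 ≤ μ u) (hμs : Summable μ)
    (hμ1 : (∑' u, μ u) = 1) {K : 𝒰 → 𝒳 → Fin M → ℝ} (hK : ∀ u, QJoint (K u) a)
    (hW : QJoint W a) (hmix : ∀ x m, HasSum (fun u => μ u * K u x m) (W x m)) :
    ∃ u, miBits W ≤ miBits (K u) := by
  by_contra! hcon
  have hlog := Real.log_pos (one_lt_two)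
  have hD : ∀ u, ∑ m, levelInfo (K u) a m < ∑ m, levelInfo W a m := by
    intro u
    have := hcon u
    rwa [hW.miBits_eq, (hK u).miBits_eq, div_lt_div_iff_of_pos_right hlog] at this
  set ℓ : 𝒳 → Fin M → ℝ := fun x m => Real.log (W x m / (a x * ∑' x', W x' m)) with hℓ
  have hmulle : ∀ u x m, μ u * K u x m ≤ W x m := fun u x m =>
    le_hasSum (hmix x m) u (fun v _ => mul_nonneg (hμ0 v) ((hK v).nonneg x m))
  have hprod : ∀ m, Summable (fun z : 𝒳 × 𝒰 => μ z.2 * K z.2 z.1 m * ℓ z.1 m) := by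
    intro m
    refine Summable.of_norm ?_
    have hn : ∀ x u, ‖μ u * K u x m * ℓ x m‖ = μ u * K u x m * |ℓ x m| := by
      intro x u
      rw [Real.norm_eq_abs, abs_mul, abs_of_nonneg (mul_nonneg (hμ0 u) ((hK u).nonneg x m))]
    refine (summable_prod_of_nonneg (fun _ => norm_nonneg _)).2 ⟨fun x => ?_, ?_⟩
    · simp only [hn]
      exact (hmix x m).summable.mul_right _
    · simp only [hn, tsum_mul_right, (hmix _ m).tsum_eq]
      refine (hW.summable_term m).abs.congr (fun x => ?_)
      rw [abs_mul, abs_of_nonneg (hW.nonneg x m)]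
  have hlin : ∀ m, HasSum (fun u => μ u * ∑' x, K u x m * ℓ x m) (levelInfo W a m) := by
    intro m
    have hs : Summable (fun u => μ u * ∑' x, K u x m * ℓ x m) := by
      refine (hprod m).prod_symm.prod.congr (fun u => ?_)
      simp only [Prod.swap, mul_assoc, tsum_mul_left]
    convert hs.hasSum using 1
    have hc := Summable.tsum_comm (f := fun x u => μ u * K u x m * ℓ x m) (hprod m)
    simp only [tsum_mul_right, (hmix _ m).tsum_eq] at hc
    simp only [mul_assoc, tsum_mul_left] at hc
    rw [hc]
    rfl
  have hsum := hasSum_sum (s := Finset.univ) (fun m _ => hlin m)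
  have hconst : HasSum (fun u => μ u * ∑ m, levelInfo W a m) (∑ m, levelInfo W a m) := by
    have := (hμs.hasSum.mul_right (∑ m, levelInfo W a m))
    rwa [hμ1, one_mul] at this
  have hle : ∀ u, 0 < μ u →
      ∑ m, μ u * ∑' x, K u x m * ℓ x m < μ u * ∑ m, levelInfo W a m := by
    intro u hu
    rw [← Finset.mul_sum]
    refine mul_lt_mul_of_pos_left (lt_of_le_of_lt ?_ (hD u)) hu
    exact Finset.sum_le_sum (fun m _ => hW.sum_ge_linear (hK u) hu (hmulle u) m)
  obtain ⟨u, hu⟩ : ∃ u, 0 < μ u := by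
    by_contra! hno
    have : μ = fun _ => 0 := funext (fun u => le_antisymm (hno u) (hμ0 u))
    rw [this] at hμ1
    simp at hμ1
  refine lt_irrefl _ (hasSum_lt (fun v => ?_) (hle u hu) hsum hconst)
  rcases (hμ0 v).eq_or_lt with h0 | hv
  · simp [← h0]
  · exact (hle v hv).le

end QJoint

lemma quantJoint_qJoint {𝒳 𝒴 : Type*} {p : 𝒳 → 𝒴 → ℝ} (hp : IsJointPMF p) {M : ℕ}
    (g : 𝒴 → Fin M) : QJoint (quantJoint p g) (fun x => ∑' y, p x y) where
  nonneg x m := tsum_nonneg (fun y => by split_ifs; exacts [hp.1 x y, le_rfl])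
  marg x := by
    unfold quantJoint
    have hs : ∀ m, Summable (fun y => if g y = m then p x y else 0) := fun m =>
      Summable.of_nonneg_of_le (fun y => by split_ifs; exacts [hp.1 x y, le_rfl])
        (fun y => by split_ifs; exacts [le_rfl, hp.1 x y]) (hp.2.1.prod_factor x)
    rw [← Summable.tsum_finsetSum (fun m _ => hs m)]
    simp
  summ := hp.2.1.prod
  total := hp.2.2

/-- Randomized quantizers cannot outperform deterministic ones: if `U` is independent of
`(X,Y)` then there is a realization `u` with `I(X; f(Y,u)) ≥ I(X; f(Y,U))`, and
`I(X; f(Y,U)) ≤ I(X;[Y]_M)`. -/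
theorem randomized_quantizer_no_better {𝒳 𝒴 𝒰 : Type*}
    [Countable 𝒳] [Countable 𝒴] [Countable 𝒰]
    (p : 𝒳 → 𝒴 → ℝ) (hp : IsJointPMF p)
    (μ : 𝒰 → ℝ) (hμ0 : ∀ u, 0 ≤ μ u) (hμs : Summable μ) (hμ1 : (∑' u, μ u) = 1)
    (M : ℕ) (hM : 0 < M) (f : 𝒴 × 𝒰 → Fin M) :
    (∃ u : 𝒰,
      miBits (fun x m => ∑' y, ∑' u', if f (y, u') = m then p x y * μ u' else 0) ≤
        miBits (quantJoint p (fun y => f (y, u)))) ∧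
    miBits (fun x m => ∑' y, ∑' u', if f (y, u') = m then p x y * μ u' else 0) ≤
      quantMI p M := by
  set W : 𝒳 → Fin M → ℝ :=
    fun x m => ∑' y, ∑' u', if f (y, u') = m then p x y * μ u' else 0 with hWdef
  set a : 𝒳 → ℝ := fun x => ∑' y, p x y with ha
  have hK : ∀ u, QJoint (quantJoint p (fun y => f (y, u))) a := fun u => quantJoint_qJoint hp _
  have hmix : ∀ x m,
      HasSum (fun u => μ u * quantJoint p (fun y => f (y, u)) x m) (W x m) := by
    intro x m
    have hs : Summable (fun z : 𝒴 × 𝒰 => if f (z.1, z.2) = m then p x z.1 * μ z.2 else 0) :=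
      Summable.of_nonneg_of_le
        (fun z => by split_ifs; exacts [mul_nonneg (hp.1 x z.1) (hμ0 z.2), le_rfl])
        (fun z => by split_ifs; exacts [le_rfl, mul_nonneg (hp.1 x z.1) (hμ0 z.2)])
        ((hp.2.1.prod_factor x).mul_of_nonneg hμs (hp.1 x) hμ0)
    have he : ∀ u, ∑' y, (if f (y, u) = m then p x y * μ u else 0) =
        μ u * quantJoint p (fun y => f (y, u)) x m := by
      intro u
      unfold quantJoint
      rw [← tsum_mul_left]
      refine tsum_congr (fun y => ?_)
      rw [mul_ite, mul_zero, mul_comm]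
    have hsu := hs.prod_symm.prod
    simp only [Prod.swap, he] at hsu
    have hc := Summable.tsum_comm
      (f := fun y u => if f (y, u) = m then p x y * μ u else 0) hs
    simp only [he] at hc
    rw [hWdef]
    simp only
    rw [← hc]
    exact hsu.hasSum
  have hW : QJoint W a :=
    { nonneg := fun x m =>
        (hmix x m).nonneg (fun u => mul_nonneg (hμ0 u) ((hK u).nonneg x m))
      marg := fun x => by
        have h1 := hasSum_sum (s := Finset.univ) (fun m _ => hmix x m)
        simp only [← Finset.mul_sum, (hK _).marg] at h1
        have h2 := hμs.hasSum.mul_right (a x)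
        rw [hμ1, one_mul] at h2
        exact h1.unique h2
      summ := hp.2.1.prod
      total := hp.2.2 }
  obtain ⟨u, hu⟩ := QJoint.exists_component hμ0 hμs hμ1 hK hW hmix
  refine ⟨⟨u, hu⟩, hu.trans ?_⟩
  refine le_ciSup (f := fun g : 𝒴 → Fin M => miBits (quantJoint p g)) ?_ (fun y => f (y, u))
  refine ⟨M / Real.log 2, ?_⟩
  rintro _ ⟨g, rfl⟩
  exact (quantJoint_qJoint hp g).miBits_le
end

section
/- Let X ∈ {1,2} be a binary random variable with Pr(X = 1) = p, jointly distributed with a discrete random variable Y, with I(X;Y) = β, and let f_MAP be the MAP quantizer: f_MAP(y) = 1 if Pr(X=1|Y=y) > 1/2, f_MAP(y) = 2 if Pr(X=1|Y=y) < 1/2, and f_MAP(y) is a fair coin flip over {1,2} (independent of (X,Y)) if Pr(X=1|Y=y) = 1/2. Then I(X; f_MAP(Y)) ≥ h(p) - h( (h(p) - β)/2 ), and consequently I(X; f_MAP(Y)) ≥ β + 2/5 - h(1/5) if β < 3/5, and I(X; f_MAP(Y)) ≥ 1 - h((1-β)/2) if β ≥ 3/5. -/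
/-!
Write `e` for the error probability of the MAP guess, `e = ∑ y, min (P 0 y) (P 1 y)`; a fair coin
at a tie does not change it. The chord inequality `2 * min t (1 - t) ≤ h t` applied to each
posterior gives `2 e ≤ H(X|Y) = h p - β` (`miBits_eq`, `two_mul_min_le_hBin`), and Fano's
inequality, here a two-point instance of concavity of `h` (`fano`), gives
`I(X; f(Y)) ≥ h p - h e`. As `β ≥ 0` and `h p ≤ 1`, the number `(h p - β) / 2` is at most `1/2`,
and monotonicity of `h` on `[0, 1/2]` yields the first bound.

For the other two put `t = (h p - β) / 2`, so that the first bound reads `β + 2 t - h t`. The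
concave function `h t - 2 t` has its maximum at `t = 1/5` (`hBin_tangent`), and is nondecreasing
on `[0, 1/5]` (`hBin_sub_mono`), where `t ≤ (1 - β) / 2 ≤ 1/5` when `β ≥ 3/5`.
-/


open scoped BigOperators

lemma hBin_eq (t : ℝ) : hBin t = Real.binEntropy t / Real.log 2 := by
  unfold hBin Real.binEntropy Real.logb
  rw [Real.log_inv, Real.log_inv]
  ring

lemma hBin_zero : hBin 0 = 0 := by simp [hBin]

lemma hBin_half : hBin (1 / 2) = 1 := by
  rw [hBin_eq, one_div, Real.binEntropy_two_inv]
  exact div_self (Real.log_pos (by norm_num)).ne'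

lemma hBin_symm (t : ℝ) : hBin (1 - t) = hBin t := by
  unfold hBin
  rw [sub_sub_cancel]
  ring

lemma hBin_le_one (t : ℝ) : hBin t ≤ 1 := by
  rw [hBin_eq]
  exact div_le_one_of_le₀ Real.binEntropy_le_log_two (Real.log_pos (by norm_num)).le

lemma hBin_concave {x y a b : ℝ} (hx : x ∈ Set.Icc (0 : ℝ) 1) (hy : y ∈ Set.Icc (0 : ℝ) 1)
    (ha : 0 ≤ a) (hb : 0 ≤ b) (hab : a + b = 1) :
    a * hBin x + b * hBin y ≤ hBin (a * x + b * y) := by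
  have h2 : (0 : ℝ) < Real.log 2 := Real.log_pos (by norm_num)
  have h := Real.strictConcave_binEntropy.concaveOn.2 hx hy ha hb hab
  simp only [smul_eq_mul] at h
  rw [hBin_eq, hBin_eq, hBin_eq, mul_div_assoc', mul_div_assoc', ← add_div]
  gcongr

lemma hBin_mono {s t : ℝ} (hs : 0 ≤ s) (hst : s ≤ t) (ht : t ≤ 1 / 2) : hBin s ≤ hBin t := by
  rw [hBin_eq, hBin_eq]
  have h2 : (0 : ℝ) < Real.log 2 := Real.log_pos (by norm_num)
  gcongr
  exact Real.binEntropy_strictMonoOn.monotoneOn ⟨hs, by linarith⟩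
    ⟨by linarith, by linarith⟩ hst

/-- The chord of the concave function `hBin` from `0` to `1/2`. -/
lemma two_mul_le_hBin {t : ℝ} (h0 : 0 ≤ t) (h1 : t ≤ 1 / 2) : 2 * t ≤ hBin t := by
  have h := hBin_concave (x := 0) (y := 1 / 2) (by simp) (by constructor <;> norm_num)
    (a := 1 - 2 * t) (b := 2 * t) (by linarith) (by linarith) (by ring)
  simp only [hBin_zero, hBin_half] at h
  have e : (1 - 2 * t) * 0 + 2 * t * (1 / 2) = t := by ring
  rw [e] at h
  linarith

lemma two_mul_min_le_hBin {t : ℝ} (h0 : 0 ≤ t) (h1 : t ≤ 1) : 2 * min t (1 - t) ≤ hBin t := by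
  rcases le_total t (1 / 2) with h | h
  · rw [min_eq_left (by linarith)]
    exact two_mul_le_hBin h0 h
  · rw [min_eq_right (by linarith), ← hBin_symm]
    exact two_mul_le_hBin (by linarith) (by linarith)

lemma hBin_fifth : hBin (1 / 5) = Real.logb 2 5 - 8 / 5 := by
  have h4 : Real.logb 2 4 = 2 := by
    rw [show (4 : ℝ) = 2 ^ (2 : ℝ) by norm_num]
    exact Real.logb_rpow (by norm_num) (by norm_num)
  have e : (1 : ℝ) - 1 / 5 = 4 / 5 := by norm_num
  unfold hBin
  rw [e, Real.logb_div (by norm_num) (by norm_num), Real.logb_div (by norm_num) (by norm_num), h4,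
    Real.logb_one]
  ring

/-- One term of Gibbs' inequality, in nats. -/
lemma gibbs_term {t c : ℝ} (ht : 0 ≤ t) (hc : 0 < c) :
    t * Real.log c - t * Real.log t ≤ c - t := by
  rcases ht.eq_or_lt with rfl | ht
  · simpa using hc.le
  · have h := Real.log_le_sub_one_of_pos (div_pos hc ht)
    rw [Real.log_div hc.ne' ht.ne'] at h
    have h' := mul_le_mul_of_nonneg_left h ht.le
    have e : t * (c / t - 1) = c - t := by field_simp
    linarith

/-- The tangent line of `hBin` at `1/5`, which has slope `2`, lies above `hBin`. -/
lemma hBin_tangent {t : ℝ} (h0 : 0 ≤ t) (h1 : t ≤ 1) :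
    hBin t - 2 * t ≤ hBin (1 / 5) - 2 / 5 := by
  have h2 : (0 : ℝ) < Real.log 2 := Real.log_pos (by norm_num)
  have a := gibbs_term h0 (c := 1 / 5) (by norm_num)
  have b := gibbs_term (t := 1 - t) (by linarith) (c := 4 / 5) (by norm_num)
  have l4 : Real.log 4 = 2 * Real.log 2 := by
    rw [show (4 : ℝ) = 2 ^ 2 by norm_num, Real.log_pow]; norm_num
  rw [Real.log_div (by norm_num) (by norm_num), Real.log_one] at a
  rw [Real.log_div (by norm_num) (by norm_num), l4] at b
  rw [hBin_fifth]
  have key : hBin t - 2 * t - Real.logb 2 5 + 2 =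
      (-(t * Real.log t) - (1 - t) * Real.log (1 - t) - 2 * t * Real.log 2 - Real.log 5
        + 2 * Real.log 2) / Real.log 2 := by
    unfold hBin Real.logb
    field_simp
  have : hBin t - 2 * t - Real.logb 2 5 + 2 ≤ 0 := by
    rw [key]
    apply div_nonpos_of_nonpos_of_nonneg _ h2.le
    linarith
  linarith

/-- A concave function is nondecreasing to the left of its maximizer, here `1/5`. -/
lemma hBin_sub_mono {s t : ℝ} (h0 : 0 ≤ s) (hst : s ≤ t) (ht : t ≤ 1 / 5) :
    hBin s - 2 * s ≤ hBin t - 2 * t := by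
  rcases ht.eq_or_lt with rfl | ht
  · have := hBin_tangent h0 (by linarith)
    linarith
  have hd : 0 < 1 / 5 - s := by linarith
  have hm := hBin_tangent h0 (by linarith)
  obtain ⟨c, hc⟩ : ∃ c, c = (t - s) / (1 / 5 - s) := ⟨_, rfl⟩
  have hc0 : 0 ≤ c := hc ▸ div_nonneg (by linarith) hd.le
  have hc1 : c ≤ 1 := by rw [hc, div_le_one hd]; linarith
  have hct : c * (1 / 5 - s) = t - s := by rw [hc, div_mul_cancel₀ _ hd.ne']
  have h := hBin_concave (x := s) (y := 1 / 5) ⟨h0, by linarith⟩ (by constructor <;> norm_num)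
    (a := 1 - c) (b := c) (by linarith) hc0 (by ring)
  have e : (1 - c) * s + c * (1 / 5) = t := by linarith
  rw [e] at h
  have := mul_le_mul_of_nonneg_left hm hc0
  linarith

lemma mul_hBin_div {a b : ℝ} (ha : 0 ≤ a) (hb : 0 ≤ b) :
    (a + b) * hBin (a / (a + b)) =
      -(a * Real.logb 2 (a / (a + b))) - b * Real.logb 2 (b / (a + b)) := by
  rcases (add_nonneg ha hb).eq_or_lt with h | h
  · have ha' : a = 0 := by linarith
    have hb' : b = 0 := by linarith
    simp [ha', hb']
  · unfold hBin
    have e : 1 - a / (a + b) = b / (a + b) := by field_simp; ring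
    rw [e]
    field_simp

lemma mul_logb_div {a b r : ℝ} (ha : 0 ≤ a) (hb : 0 ≤ b) (har : a ≤ r) :
    a * Real.logb 2 (a / (r * (a + b))) = a * Real.logb 2 (a / (a + b)) - a * Real.logb 2 r := by
  rcases ha.eq_or_lt with rfl | ha
  · simp
  · rw [mul_comm r, ← div_div, Real.logb_div (by positivity) (by linarith)]
    ring

lemma summable_mul_logb {ι : Type*} {a b : ι → ℝ} (ha : ∀ i, 0 ≤ a i) (hb : ∀ i, 0 ≤ b i)
    (sb : Summable b) : Summable fun i => a i * Real.logb 2 (a i / (a i + b i)) := by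
  have h2 : (0 : ℝ) < Real.log 2 := Real.log_pos (by norm_num)
  refine Summable.of_norm_bounded (sb.mul_left (Real.log 2)⁻¹) fun i => ?_
  rcases (ha i).eq_or_lt with h | h
  · rw [← h]
    simp only [zero_mul, norm_zero]
    exact mul_nonneg (inv_nonneg.2 h2.le) (hb i)
  have hs : 0 < a i + b i := by linarith [hb i]
  have h1 : Real.log (a i / (a i + b i)) ≤ 0 :=
    Real.log_nonpos (by positivity) (by rw [div_le_one hs]; linarith [hb i])
  have h3 := Real.one_sub_inv_le_log_of_pos (div_pos h hs)
  have h4 := mul_le_mul_of_nonneg_left h3 h.le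
  have e : a i * (1 - (a i / (a i + b i))⁻¹) = - b i := by field_simp; ring
  have h5 : a i * Real.log (a i / (a i + b i)) ≤ 0 := mul_nonpos_of_nonneg_of_nonpos h.le h1
  have e2 : a i * Real.logb 2 (a i / (a i + b i)) =
      (Real.log 2)⁻¹ * (a i * Real.log (a i / (a i + b i))) := by
    unfold Real.logb; ring
  rw [e2, norm_mul, Real.norm_of_nonneg (inv_nonneg.2 h2.le), Real.norm_of_nonpos h5]
  gcongr
  linarith

/-- `I(X;Y) = H(X) - H(X|Y)` for binary `X`; the conditional entropy series converges. -/
lemma miBits_eq {ι : Type*} (P : Fin 2 → ι → ℝ) (h0 : ∀ x y, 0 ≤ P x y)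
    (hs : ∀ x, Summable (P x)) (h1 : (∑' y, P 0 y) + ∑' y, P 1 y = 1) :
    Summable (fun y => (P 0 y + P 1 y) * hBin (P 0 y / (P 0 y + P 1 y))) ∧
    miBits P = hBin (∑' y, P 0 y) -
      ∑' y, (P 0 y + P 1 y) * hBin (P 0 y / (P 0 y + P 1 y)) := by
  have s0 := summable_mul_logb (h0 0) (h0 1) (hs 1)
  have s1 := summable_mul_logb (h0 1) (h0 0) (hs 0)
  simp only [add_comm (P 1 _) (P 0 _)] at s1
  simp only [mul_hBin_div (h0 0 _) (h0 1 _)]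
  refine ⟨s0.neg.sub s1, ?_⟩
  have t0 : ∀ y, P 0 y * Real.logb 2 (P 0 y / ((∑' y, P 0 y) * (P 0 y + P 1 y))) =
      P 0 y * Real.logb 2 (P 0 y / (P 0 y + P 1 y)) - P 0 y * Real.logb 2 (∑' y, P 0 y) :=
    fun y => mul_logb_div (h0 0 y) (h0 1 y) ((hs 0).le_tsum y fun i _ => h0 0 i)
  have t1 : ∀ y, P 1 y * Real.logb 2 (P 1 y / ((∑' y, P 1 y) * (P 0 y + P 1 y))) =
      P 1 y * Real.logb 2 (P 1 y / (P 0 y + P 1 y)) - P 1 y * Real.logb 2 (∑' y, P 1 y) := by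
    intro y
    have := mul_logb_div (h0 1 y) (h0 0 y) ((hs 1).le_tsum y fun i _ => h0 1 i)
    rwa [add_comm (P 1 y)] at this
  unfold miBits
  simp only [tsum_fintype (L := .unconditional _), Fin.sum_univ_two, t0, t1]
  rw [s0.tsum_sub ((hs 0).mul_right _), s1.tsum_sub ((hs 1).mul_right _),
    s0.neg.tsum_sub s1, tsum_neg, tsum_mul_right, tsum_mul_right]
  unfold hBin
  rw [← h1, add_sub_cancel_left]
  ring

/-- The tangent line of `hBin` at `r`, in homogeneous form, lies above `hBin`. -/
lemma mul_hBin_div_le {a b r : ℝ} (ha : 0 ≤ a) (hb : 0 ≤ b) (har : a ≤ r) (hbr : b ≤ 1 - r) :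
    (a + b) * hBin (a / (a + b)) ≤ -(a * Real.logb 2 r) - b * Real.logb 2 (1 - r) := by
  have h2 : (0 : ℝ) < Real.log 2 := Real.log_pos (by norm_num)
  have key : ∀ {u v c : ℝ}, 0 ≤ u → 0 ≤ v → u ≤ c →
      u * Real.log c - u * Real.log (u / (u + v)) ≤ c * (u + v) - u := by
    intro u v c hu hv hc
    rcases hu.eq_or_lt with rfl | hu
    · simpa using mul_nonneg hc hv
    · have hc0 : 0 < c := by linarith
      have := gibbs_term hu.le (c := c * (u + v)) (by positivity)
      rw [Real.log_mul hc0.ne' (by positivity)] at this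
      rw [Real.log_div hu.ne' (by positivity)]
      linarith
  have k1 := key ha hb har
  have k2 := key hb ha hbr
  rw [add_comm b a] at k2
  have e : (a + b) * hBin (a / (a + b)) - (-(a * Real.logb 2 r) - b * Real.logb 2 (1 - r)) =
      ((a * Real.log r - a * Real.log (a / (a + b))) +
        (b * Real.log (1 - r) - b * Real.log (b / (a + b)))) / Real.log 2 := by
    rw [mul_hBin_div ha hb]
    unfold Real.logb
    field_simp
    ring
  have : (a + b) * hBin (a / (a + b)) - (-(a * Real.logb 2 r) - b * Real.logb 2 (1 - r)) ≤ 0 := by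
    rw [e]
    apply div_nonpos_of_nonpos_of_nonneg _ h2.le
    linarith
  linarith

/-- Fano's inequality for a binary guess of a binary variable: the conditional entropy is at most
the entropy of the error indicator. -/
lemma fano {a b c d : ℝ} (ha : 0 ≤ a) (hb : 0 ≤ b) (hc : 0 ≤ c) (hd : 0 ≤ d)
    (h : a + b + c + d = 1) :
    (a + b) * hBin (a / (a + b)) + (c + d) * hBin (c / (c + d)) ≤ hBin (b + c) := by
  have hm : (a + b) * hBin (a / (a + b)) = (a + b) * hBin (b / (a + b)) := by
    rw [mul_hBin_div ha hb, add_comm a b, mul_hBin_div hb ha]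
    ring
  have mem : ∀ {u v : ℝ}, 0 ≤ u → 0 ≤ v → u / (u + v) ∈ Set.Icc (0 : ℝ) 1 := fun hu hv =>
    ⟨by positivity, div_le_one_of_le₀ (by linarith) (by linarith)⟩
  have canc : ∀ {u v : ℝ}, 0 ≤ u → 0 ≤ v → (u + v) * (u / (u + v)) = u := by
    intro u v hu hv
    rcases (add_nonneg hu hv).eq_or_lt with h | h
    · have : u = 0 := by linarith
      simp [this]
    · field_simp
  rw [hm]
  have := hBin_concave (mem hb ha) (mem hc hd) (a := b + a) (b := c + d)
    (by linarith) (by linarith) (by linarith)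
  simp only [canc hb ha, canc hc hd] at this
  rwa [add_comm b a] at this

/-- Performance of the MAP quantizer for binary `X`: `x = 0` encodes the symbol `1` and
`x = 1` encodes the symbol `2`; ties `Pr(X=1|Y=y) = 1/2` are broken by an independent
fair coin, modeled by the randomized quantization kernel `w`. -/
theorem map_quantizer_bound {𝒴 : Type*} [Countable 𝒴] (P : Fin 2 → 𝒴 → ℝ)
    (hP : IsJointPMF P) (p β : ℝ) (hp : (∑' y, P 0 y) = p) (hβ : miBits P = β) :
    let w : 𝒴 → Fin 2 → ℝ := fun y m =>
      if P 0 y / (∑' x, P x y) > 1 / 2 then (if m = 0 then 1 else 0)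
      else if P 0 y / (∑' x, P x y) < 1 / 2 then (if m = 1 then 1 else 0)
      else 1 / 2
    let q : Fin 2 → Fin 2 → ℝ := fun x m => ∑' y, P x y * w y m
    hBin p - hBin ((hBin p - β) / 2) ≤ miBits q ∧
    (β < 3 / 5 → β + 2 / 5 - hBin (1 / 5) ≤ miBits q) ∧
    (3 / 5 ≤ β → 1 - hBin ((1 - β) / 2) ≤ miBits q) := by
  intro w q
  obtain ⟨h0, hsum, htot⟩ := hP
  have hs : ∀ x, Summable (P x) := fun x => hsum.prod_factor x
  simp only [tsum_fintype (L := .unconditional (Fin 2)), Fin.sum_univ_two] at htot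
  obtain ⟨sH, hmi⟩ := miBits_eq P h0 hs htot
  have hw0 : ∀ y m, 0 ≤ w y m := by
    intro y m; simp only [w]; split_ifs <;> norm_num
  have hw1 : ∀ y, w y 0 + w y 1 = 1 := by
    intro y; simp only [w, zero_ne_one, one_ne_zero, if_true, if_false]; split_ifs <;> norm_num
  have hwle : ∀ y m, w y m ≤ 1 := by
    intro y m; simp only [w]; split_ifs <;> norm_num
  have hsw : ∀ x m, Summable fun y => P x y * w y m := fun x m =>
    (hs x).of_nonneg_of_le (fun y => mul_nonneg (h0 x y) (hw0 y m))
      fun y => mul_le_of_le_one_right (h0 x y) (hwle y m)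
  have hq0 : ∀ x m, 0 ≤ q x m := fun x m => tsum_nonneg fun y => mul_nonneg (h0 x y) (hw0 y m)
  have hqrow : ∀ x, q x 0 + q x 1 = ∑' y, P x y := by
    intro x
    simp only [q]
    rw [← (hsw x 0).tsum_add (hsw x 1)]
    exact tsum_congr fun y => by rw [← mul_add, hw1, mul_one]
  -- The error mass at `y` is `min (P 0 y) (P 1 y)`, ties included.
  have hmin : ∀ y, P 1 y * w y 0 + P 0 y * w y 1 = min (P 0 y) (P 1 y) := by
    intro y
    have e : ∑' x, P x y = P 0 y + P 1 y := by rw [tsum_fintype, Fin.sum_univ_two]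
    have ha := h0 0 y
    have hb := h0 1 y
    simp only [w, e, zero_ne_one, one_ne_zero, if_true, if_false]
    rcases (add_nonneg ha hb).eq_or_lt with h | h
    · have ha' : P 0 y = 0 := by linarith
      have hb' : P 1 y = 0 := by linarith
      simp [ha', hb']
    split_ifs with h1 h2
    · rw [gt_iff_lt, lt_div_iff₀ h] at h1
      rw [min_eq_right (by linarith)]; simp
    · rw [div_lt_iff₀ h] at h2
      rw [min_eq_left (by linarith)]; simp
    · rw [gt_iff_lt, lt_div_iff₀ h] at h1
      rw [div_lt_iff₀ h] at h2
      have : P 0 y = P 1 y := by linarith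
      rw [this, min_self]; ring
  have he : q 1 0 + q 0 1 = ∑' y, min (P 0 y) (P 1 y) := by
    simp only [q]
    rw [← (hsw 1 0).tsum_add (hsw 0 1)]
    exact tsum_congr hmin
  have smin : Summable fun y => min (P 0 y) (P 1 y) :=
    ((hsw 1 0).add (hsw 0 1)).congr hmin
  have hpt : ∀ y, 2 * min (P 0 y) (P 1 y) ≤
      (P 0 y + P 1 y) * hBin (P 0 y / (P 0 y + P 1 y)) := by
    intro y
    have ha := h0 0 y
    have hb := h0 1 y
    rcases (add_nonneg ha hb).eq_or_lt with h | h
    · have ha' : P 0 y = 0 := by linarith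
      have hb' : P 1 y = 0 := by linarith
      simp [ha', hb']
    have := mul_le_mul_of_nonneg_left (two_mul_min_le_hBin (t := P 0 y / (P 0 y + P 1 y))
      (by positivity) (div_le_one_of_le₀ (by linarith) h.le)) h.le
    have e1 : 1 - P 0 y / (P 0 y + P 1 y) = P 1 y / (P 0 y + P 1 y) := by field_simp; ring
    rwa [e1, min_div_div_right h.le, ← mul_assoc, mul_comm _ (2 : ℝ), mul_assoc,
      mul_div_cancel₀ _ h.ne'] at this
  have hle : 2 * (q 1 0 + q 0 1) ≤ hBin p - β := by
    have := (smin.mul_left 2).tsum_le_tsum hpt sH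
    rw [tsum_mul_left, ← he] at this
    rw [hp, hβ] at hmi
    linarith
  have hfano : hBin p - hBin (q 1 0 + q 0 1) ≤ miBits q := by
    have hq1 : (∑' m, q 0 m) + ∑' m, q 1 m = 1 := by
      simp only [tsum_fintype (L := .unconditional (Fin 2)), Fin.sum_univ_two, hqrow]
      exact htot
    obtain ⟨-, hmq⟩ := miBits_eq q hq0 (fun x => (hasSum_fintype _).summable) hq1
    simp only [tsum_fintype (L := .unconditional (Fin 2)), Fin.sum_univ_two] at hmq hq1
    rw [hqrow 0, hp] at hmq
    have := fano (hq0 0 0) (hq0 1 0) (hq0 0 1) (hq0 1 1) (by linarith)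
    linarith
  have he0 : 0 ≤ q 1 0 + q 0 1 := add_nonneg (hq0 1 0) (hq0 0 1)
  have hp1 : hBin p ≤ 1 := hBin_le_one p
  have hβ0 : 0 ≤ β := by
    have hp' : ∑' y, P 1 y = 1 - p := by linarith
    have hpt' : ∀ y, (P 0 y + P 1 y) * hBin (P 0 y / (P 0 y + P 1 y)) ≤
        -(P 0 y * Real.logb 2 p) - P 1 y * Real.logb 2 (1 - p) := fun y =>
      mul_hBin_div_le (h0 0 y) (h0 1 y) (hp ▸ (hs 0).le_tsum y fun i _ => h0 0 i)
        (hp' ▸ (hs 1).le_tsum y fun i _ => h0 1 i)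
    have r0 := ((hs 0).mul_right (Real.logb 2 p)).neg
    have r1 := (hs 1).mul_right (Real.logb 2 (1 - p))
    have := sH.tsum_le_tsum hpt' (r0.sub r1)
    rw [r0.tsum_sub r1, tsum_neg, tsum_mul_right, tsum_mul_right, hp, hp'] at this
    rw [hp, hβ] at hmi
    unfold hBin at hmi
    unfold hBin at this
    linarith
  have main : hBin p - hBin ((hBin p - β) / 2) ≤ miBits q := by
    have := hBin_mono he0 (t := (hBin p - β) / 2) (by linarith) (by linarith)
    linarith
  refine ⟨main, fun _ => ?_, fun hβ3 => ?_⟩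
  · have := hBin_tangent (t := (hBin p - β) / 2) (by linarith) (by linarith)
    linarith
  · have := hBin_sub_mono (s := (hBin p - β) / 2) (t := (1 - β) / 2) (by linarith)
      (by linarith) (by linarith)
    linarith
end

section
/- Let 0 ≤ β ≤ 1, let X ~ Bernoulli(1/2) on {0,1}, and let Y be the output of a binary erasure channel with input X: Y = X with probability β and Y = '?' with probability 1-β, independently of X. Then I(X;Y) = β; the MAP quantizer f_MAP satisfies I(X; f_MAP(Y)) = 1 - h((1-β)/2); the asymmetric quantizer f_Z defined by f_Z(y) = 1 if y ∈ {1, ?} and f_Z(y) = 2 if y = 0 achieves I(X;[Y]_2) = I(X; f_Z(Y)) = (β/2)·h((1-β)/(2-β)) + 1 - h((1-β)/(2-β)); and in particular I(X;[Y]_2) ≥ β/2. -/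
/-!
Every information quantity here is a finite sum, so the equalities are direct computations with
logarithms; the degenerate cases `β = 0` and `β = 1` only produce terms `0 · log 0 = 0`.

For the optimality of `f_Z`, the two-level quantizers of `{0, 1, ?}` induce only four partitions.
The trivial one and `{?}` versus `{0, 1}` give an output independent of `X`, hence no information.
The partitions isolating `0` or isolating `1` are exchanged by the symmetry of the channel and
both attain the value of `f_Z`. With `t = (1 - β) / (2 - β)` this value equals
`β / 2 + (1 - β / 2) (1 - h t)`, which is at least `β / 2 ≥ 0` because `h ≤ 1`; so `f_Z` is
optimal and the final bound follows.
-/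

open scoped BigOperators

lemma miBits_fin_two (q : Fin 2 → Fin 2 → ℝ) {a b c d : ℝ} (ha : q 0 0 = a) (hb : q 0 1 = b)
    (hc : q 1 0 = c) (hd : q 1 1 = d) :
    miBits q = a * Real.logb 2 (a / ((a + b) * (a + c))) + b * Real.logb 2 (b / ((a + b) * (b + d)))
      + c * Real.logb 2 (c / ((c + d) * (a + c))) + d * Real.logb 2 (d / ((c + d) * (b + d))) := by
  simp only [miBits, tsum_fintype, Fin.sum_univ_two, ha, hb, hc, hd]
  ring

/-- An output of mass `r` that is independent of a uniform input contributes no information, also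
when `r = 0`. -/
lemma mul_logb_indep (r : ℝ) : r / 2 * Real.logb 2 (r / 2 / (1 / 2 * r)) = 0 := by
  rcases eq_or_ne r 0 with rfl | hr
  · simp
  · have : r / 2 / (1 / 2 * r) = 1 := by field_simp
    rw [this]; simp

/-- An output of mass `b` that determines the uniform input contributes `b` times one bit. -/
lemma mul_logb_reveal (b : ℝ) : b * Real.logb 2 (b / (1 / 2 * b)) = b := by
  rcases eq_or_ne b 0 with rfl | hb
  · simp
  · have : b / (1 / 2 * b) = 2 := by field_simp
    rw [this]; simp

lemma miBits_indep (q : Fin 2 → Fin 2 → ℝ) (r s : ℝ) (hrs : r + s = 1) (ha : q 0 0 = r / 2)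
    (hb : q 0 1 = s / 2) (hc : q 1 0 = r / 2) (hd : q 1 1 = s / 2) : miBits q = 0 := by
  rw [miBits_fin_two q ha hb hc hd]
  have e1 : r / 2 + s / 2 = 1 / 2 := by linarith
  have e2 : r / 2 + r / 2 = r := by ring
  have e3 : s / 2 + s / 2 = s := by ring
  simp only [e1, e2, e3, mul_logb_indep]
  norm_num

/-- The information retained by a quantizer isolating one unerased symbol. -/
noncomputable def zValue (β : ℝ) : ℝ :=
  β / 2 * hBin ((1 - β) / (2 - β)) + 1 - hBin ((1 - β) / (2 - β))

lemma half_le_zValue {β : ℝ} (h1 : β ≤ 1) : β / 2 ≤ zValue β := by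
  unfold zValue
  nlinarith [hBin_le_one ((1 - β) / (2 - β))]

/-- The nonzero terms of the mutual information for a Z-shaped joint law. The two inputs share the
mixed output with masses `(1 - β) / 2` and `1 / 2`; the other output, of mass `β / 2`, determines
the input. -/
lemma z_terms {β : ℝ} (h1 : β ≤ 1) :
    (1 - β) / 2 * Real.logb 2 ((1 - β) / 2 / (1 / 2 * ((2 - β) / 2)))
      + β / 2 * Real.logb 2 (β / 2 / (1 / 2 * (β / 2)))
      + 1 / 2 * Real.logb 2 (1 / 2 / (1 / 2 * ((2 - β) / 2))) = zValue β := by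
  have h2 : 2 - β ≠ 0 := by linarith
  have e1 : 1 - (1 - β) / (2 - β) = 1 / (2 - β) := by field_simp; ring
  have e2 : (1 : ℝ) / 2 / (1 / 2 * ((2 - β) / 2)) = 2 * (1 / (2 - β)) := by field_simp
  have e3 : (1 - β) / 2 / (1 / 2 * ((2 - β) / 2)) = 2 * ((1 - β) / (2 - β)) := by field_simp
  have e4 : Real.logb 2 (2 * (1 / (2 - β))) = 1 + Real.logb 2 (1 / (2 - β)) := by
    rw [Real.logb_mul (by norm_num) (by positivity)]; simp
  have e5 : (1 - β) / 2 * Real.logb 2 (2 * ((1 - β) / (2 - β)))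
      = (1 - β) / 2 * (1 + Real.logb 2 ((1 - β) / (2 - β))) := by
    rcases eq_or_ne (1 - β) 0 with h | h
    · simp [h]
    · rw [Real.logb_mul (by norm_num) (div_ne_zero h h2)]; simp
  rw [mul_logb_reveal, e2, e3, e4, e5, zValue, hBin, e1]
  generalize Real.logb 2 ((1 - β) / (2 - β)) = u
  generalize Real.logb 2 (1 / (2 - β)) = v
  field_simp
  ring

/-- The four Z-shaped joint laws, obtained from each other by relabelling input or output, share
the value `zValue β`. -/
lemma miBits_z {β : ℝ} (h1 : β ≤ 1) (q : Fin 2 → Fin 2 → ℝ)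
    (h : (q 0 0 = (1 - β) / 2 ∧ q 0 1 = β / 2 ∧ q 1 0 = 1 / 2 ∧ q 1 1 = 0) ∨
      (q 0 0 = β / 2 ∧ q 0 1 = (1 - β) / 2 ∧ q 1 0 = 0 ∧ q 1 1 = 1 / 2) ∨
      (q 0 0 = 1 / 2 ∧ q 0 1 = 0 ∧ q 1 0 = (1 - β) / 2 ∧ q 1 1 = β / 2) ∨
      (q 0 0 = 0 ∧ q 0 1 = 1 / 2 ∧ q 1 0 = β / 2 ∧ q 1 1 = (1 - β) / 2)) :
    miBits q = zValue β := by
  have e1 : (1 - β) / 2 + β / 2 = 1 / 2 := by ring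
  have e2 : β / 2 + (1 - β) / 2 = 1 / 2 := by ring
  have e3 : (1 - β) / 2 + 1 / 2 = (2 - β) / 2 := by ring
  have e4 : 1 / 2 + (1 - β) / 2 = (2 - β) / 2 := by ring
  rw [← z_terms h1]
  rcases h with ⟨ha, hb, hc, hd⟩ | ⟨ha, hb, hc, hd⟩ | ⟨ha, hb, hc, hd⟩ | ⟨ha, hb, hc, hd⟩ <;>
    rw [miBits_fin_two q ha hb hc hd] <;>
    simp only [e1, e2, e3, e4, add_zero, zero_add, zero_mul] <;> ring

/-- The MAP output is a binary symmetric channel with crossover probability `(1 - β) / 2`. -/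
lemma miBits_bsc {β : ℝ} (h0 : 0 ≤ β) (q : Fin 2 → Fin 2 → ℝ)
    (ha : q 0 0 = (1 + β) / 4) (hb : q 0 1 = (1 - β) / 4)
    (hc : q 1 0 = (1 - β) / 4) (hd : q 1 1 = (1 + β) / 4) :
    miBits q = 1 - hBin ((1 - β) / 2) := by
  rw [miBits_fin_two q ha hb hc hd]
  have e1 : (1 + β) / 4 + (1 - β) / 4 = 1 / 2 := by ring
  have e2 : (1 - β) / 4 + (1 + β) / 4 = 1 / 2 := by ring
  have e3 : 1 - (1 - β) / 2 = (1 + β) / 2 := by ring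
  have e4 : (1 + β) / 4 / (1 / 2 * (1 / 2)) = 2 * ((1 + β) / 2) := by ring
  have e5 : (1 - β) / 4 / (1 / 2 * (1 / 2)) = 2 * ((1 - β) / 2) := by ring
  have e6 : Real.logb 2 (2 * ((1 + β) / 2)) = 1 + Real.logb 2 ((1 + β) / 2) := by
    rw [Real.logb_mul (by norm_num) (by positivity)]; simp
  have e7 : (1 - β) / 4 * Real.logb 2 (2 * ((1 - β) / 2))
      = (1 - β) / 4 * (1 + Real.logb 2 ((1 - β) / 2)) := by
    rcases eq_or_ne (1 - β) 0 with h | h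
    · simp [h]
    · rw [Real.logb_mul (by norm_num) (div_ne_zero h (by norm_num))]; simp
  simp only [e1, e2, e4, e5, e6, e7, hBin, e3]
  ring

/-- The binary erasure channel example: `X ~ Bernoulli(1/2)` on `{0,1}`, `𝒴 = Fin 3`
with `y = 2` playing the role of the erasure symbol `?`. The MAP quantizer (with fair
coin tie-breaking, modeled by the kernel `w`) retains only `1 - h((1-β)/2)`, while the
asymmetric quantizer `f_Z` is optimal among 2-level quantizers and retains
`(β/2) h((1-β)/(2-β)) + 1 - h((1-β)/(2-β)) ≥ β/2`. -/
theorem bec_quantization (β : ℝ) (hβ0 : 0 ≤ β) (hβ1 : β ≤ 1) :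
    let p : Fin 2 → Fin 3 → ℝ := fun x y =>
      (1 / 2) * (if (y : ℕ) = (x : ℕ) then β else if (y : ℕ) = 2 then 1 - β else 0)
    let w : Fin 3 → Fin 2 → ℝ := fun y m =>
      if p 0 y / (∑' x, p x y) > 1 / 2 then (if m = 0 then 1 else 0)
      else if p 0 y / (∑' x, p x y) < 1 / 2 then (if m = 1 then 1 else 0)
      else 1 / 2
    let fZ : Fin 3 → Fin 2 := fun y => if y = 0 then 1 else 0
    miBits p = β ∧
    miBits (fun x m => ∑' y, p x y * w y m) = 1 - hBin ((1 - β) / 2) ∧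
    quantMI p 2 = miBits (quantJoint p fZ) ∧
    miBits (quantJoint p fZ) =
      β / 2 * hBin ((1 - β) / (2 - β)) + 1 - hBin ((1 - β) / (2 - β)) ∧
    β / 2 ≤ quantMI p 2 := by
  intro p w fZ
  have p00 : p 0 0 = β / 2 := by simp [p]; ring
  have p01 : p 0 1 = 0 := by simp [p]
  have p02 : p 0 2 = (1 - β) / 2 := by simp [p]; ring
  have p10 : p 1 0 = 0 := by simp [p]
  have p11 : p 1 1 = β / 2 := by simp [p]; ring
  have p12 : p 1 2 = (1 - β) / 2 := by simp [p]; ring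
  have hmi : miBits p = β := by
    simp only [miBits, tsum_fintype, Fin.sum_univ_two, Fin.sum_univ_three, p00, p01, p02, p10, p11,
      p12, zero_mul, add_zero, zero_add]
    have e1 : β / 2 + (1 - β) / 2 = 1 / 2 := by ring
    have e2 : (1 - β) / 2 + (1 - β) / 2 = 1 - β := by ring
    rw [e1, e2, mul_logb_indep, mul_logb_reveal]
    ring
  have hmap : miBits (fun x m => ∑' y, p x y * w y m) = 1 - hBin ((1 - β) / 2) := by
    -- The factors in `w0` and `w2` are kept because at a symbol of mass zero the posterior is
    -- the junk value `0 / 0 = 0`, and `w` then differs from the stated kernel.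
    have w0 : ∀ m, β / 2 * w 0 m = β / 2 * (if m = 0 then 1 else 0) := by
      intro m
      rcases eq_or_ne β 0 with h | h
      · simp [h]
      · have : (β / 2) / (β / 2) = 1 := by field_simp
        simp only [w, tsum_fintype, Fin.sum_univ_two, p00, p10, add_zero, this]
        norm_num
    have w1 : ∀ m, w 1 m = if m = 1 then 1 else 0 := by
      intro m
      simp only [w, tsum_fintype, Fin.sum_univ_two, p01, p11, zero_div]
      norm_num
    have w2 : ∀ m, (1 - β) / 2 * w 2 m = (1 - β) / 2 * (1 / 2) := by
      intro m
      rcases eq_or_ne (1 - β) 0 with h | h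
      · simp [h]
      · have : (1 - β) / 2 / ((1 - β) / 2 + (1 - β) / 2) = 1 / 2 := by field_simp; norm_num
        simp only [w, tsum_fintype, Fin.sum_univ_two, p02, p12, this]
        norm_num
    apply miBits_bsc hβ0 <;>
      simp only [tsum_fintype, Fin.sum_univ_three, p00, p01, p02, p10, p11, p12, w0, w1, w2] <;>
      norm_num <;> ring
  have hZ : miBits (quantJoint p fZ) = zValue β := by
    apply miBits_z hβ1
    left
    have z0 : fZ 0 = 1 := rfl
    have z1 : fZ 1 = 0 := rfl
    have z2 : fZ 2 = 0 := rfl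
    simp only [quantJoint, z0, z1, z2, tsum_fintype, Fin.sum_univ_three, p00, p01, p02, p10, p11,
      p12]
    refine ⟨?_, ?_, ?_, ?_⟩ <;> norm_num <;> ring
  have hpos : β / 2 ≤ zValue β := half_le_zValue hβ1
  have hle : ∀ f : Fin 3 → Fin 2, miBits (quantJoint p f) ≤ zValue β := by
    intro f
    have hq : ∀ x m, quantJoint p f x m = (if f 0 = m then p x 0 else 0)
        + (if f 1 = m then p x 1 else 0) + (if f 2 = m then p x 2 else 0) := by
      intro x m
      simp only [quantJoint, tsum_fintype, Fin.sum_univ_three]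
    have h0 : 0 ≤ zValue β := by linarith
    have htwo : ∀ i : Fin 2, i = 0 ∨ i = 1 := by decide
    rcases htwo (f 0) with f0 | f0 <;> rcases htwo (f 1) with f1 | f1 <;>
      rcases htwo (f 2) with f2 | f2 <;>
      simp only [f0, f1, f2] at hq
    · rw [miBits_indep _ 1 0] <;> simp [hq, p00, p01, p02, p10, p11, p12, h0] <;> ring
    · rw [miBits_indep _ β (1 - β)] <;> simp [hq, p00, p01, p02, p10, p11, p12, h0]
    · refine (miBits_z hβ1 _ (.inr (.inr (.inl ?_)))).le
      simp [hq, p00, p01, p02, p10, p11, p12]; ring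
    · refine (miBits_z hβ1 _ (.inr (.inl ?_))).le
      simp [hq, p00, p01, p02, p10, p11, p12]; ring
    · refine (miBits_z hβ1 _ (.inl ?_)).le
      simp [hq, p00, p01, p02, p10, p11, p12]; ring
    · refine (miBits_z hβ1 _ (.inr (.inr (.inr ?_)))).le
      simp [hq, p00, p01, p02, p10, p11, p12]; ring
    · rw [miBits_indep _ (1 - β) β] <;> simp [hq, p00, p01, p02, p10, p11, p12, h0]
    · rw [miBits_indep _ 0 1] <;> simp [hq, p00, p01, p02, p10, p11, p12, h0] <;> ring
  have hq : quantMI p 2 = zValue β := by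
    apply le_antisymm
    · exact ciSup_le hle
    · rw [← hZ]
      exact le_ciSup (f := fun f : Fin 3 → Fin 2 => miBits (quantJoint p f))
        ⟨zValue β, by rintro _ ⟨f, rfl⟩; exact hle f⟩ fZ
  exact ⟨hmi, hmap, hq.trans hZ.symm, hZ, hq ▸ hpos⟩
end

section
/- The map P_X ↦ I(X;[Y]_M) is in general not concave in P_X for a fixed channel P_{Y|X}. Specifically, let 𝒳 = 𝒴 = {1,2,3}, let Y = X (the noiseless channel), let P_{X₁} = (1/2, 1/4, 1/4) and P_{X₂} = (1/4, 1/4, 1/2). Then I(X₁;[Y]_2) = 1 and I(X₂;[Y]_2) = 1, but for every α ∈ (0,1), the mixture P_X = α·P_{X₁} + (1-α)·P_{X₂} = ((1+α)/4, 1/4, (2-α)/4) satisfies I(X;[Y]_2) < 1. -/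
/-!
For the noiseless channel, `f(Y) = f(X)` is a function of `X`, so `I(X; f(Y)) = H(f(X))`. For a
two-level quantizer this is the binary entropy of the mass that `f` sends to level `0`
(`miBits_quantJoint_noiseless`). It is at most one bit, with equality exactly when that mass is
`1/2`. Each endpoint distribution has an atom of mass `1/2`, which the quantizer can isolate,
whereas no subset of the atoms of a strict mixture has mass `1/2`. The alphabets are finite, so
the supremum over quantizers is attained and the inequality stays strict.
-/

open scoped BigOperators

/-- Total mass of the symbols that the quantizer `f` sends to level `0`. -/
noncomputable def levelZeroMass (q : Fin 3 → ℝ) (f : Fin 3 → Fin 2) : ℝ :=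
  ∑ x, if f x = 0 then q x else 0

/-- For `Y = X`, the quantized mutual information is `H(f(X))`, a binary entropy; the division by
`log 2` converts `Real.binEntropy` from nats to bits. -/
lemma miBits_quantJoint_noiseless (q : Fin 3 → ℝ) (hq : ∀ x, 0 < q x) (hsum : ∑ x, q x = 1)
    (f : Fin 3 → Fin 2) :
    miBits (quantJoint (fun x y => if x = y then q x else 0) f) =
      Real.binEntropy (levelZeroMass q f) / Real.log 2 := by
  have hjoint : quantJoint (fun x y => if x = y then q x else 0) f =
      fun x m => if f x = m then q x else 0 := by
    funext x m
    simp only [quantJoint, tsum_fintype]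
    rw [Finset.sum_eq_single x]
    · simp
    · intro y _ hy
      simp [hy.symm]
    · simp
  have hmass : ∑ x, (if f x = 1 then q x else 0) = 1 - levelZeroMass q f := by
    rw [← hsum, levelZeroMass, ← Finset.sum_sub_distrib]
    refine Finset.sum_congr rfl fun x _ => ?_
    obtain h | h : f x = 0 ∨ f x = 1 := by omega
    all_goals simp [h]
  -- The factor `q x` cancels inside the logarithm; off the support both sides vanish.
  have hterm : ∀ (x : Fin 3) (m : Fin 2) (c : ℝ),
      (if f x = m then q x else 0) * Real.logb 2 ((if f x = m then q x else 0) / (q x * c)) =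
        (if f x = m then q x else 0) * (Real.log c⁻¹ / Real.log 2) := by
    intro x m c
    split_ifs
    · rw [Real.logb, div_mul_eq_div_div, div_self (hq x).ne', one_div]
    · simp
  rw [hjoint]
  simp only [miBits, tsum_fintype, Finset.sum_ite_eq, Finset.mem_univ, if_true, hterm]
  rw [Finset.sum_comm, Fin.sum_univ_two, ← Finset.sum_mul, ← Finset.sum_mul, hmass]
  change levelZeroMass q f * (Real.log (levelZeroMass q f)⁻¹ / Real.log 2) + _ = _
  rw [Real.binEntropy]
  ring

lemma quantMI_noiseless_eq_one (q : Fin 3 → ℝ) (hq : ∀ x, 0 < q x) (hsum : ∑ x, q x = 1)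
    (f : Fin 3 → Fin 2) (hf : levelZeroMass q f = 2⁻¹) :
    quantMI (fun x y => if x = y then q x else 0) 2 = 1 := by
  have hlog : 0 < Real.log 2 := Real.log_pos one_lt_two
  apply le_antisymm
  · refine ciSup_le fun g => ?_
    rw [miBits_quantJoint_noiseless q hq hsum, div_le_one hlog]
    exact Real.binEntropy_le_log_two
  · refine le_ciSup_of_le (Set.finite_range _).bddAbove f ?_
    rw [miBits_quantJoint_noiseless q hq hsum, hf, Real.binEntropy_two_inv, div_self hlog.ne']

lemma quantMI_noiseless_lt_one (q : Fin 3 → ℝ) (hq : ∀ x, 0 < q x) (hsum : ∑ x, q x = 1)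
    (hne : ∀ f, levelZeroMass q f ≠ 2⁻¹) :
    quantMI (fun x y => if x = y then q x else 0) 2 < 1 := by
  obtain ⟨f, hf⟩ := exists_eq_ciSup_of_finite
    (f := fun f : Fin 3 → Fin 2 =>
      miBits (quantJoint (fun x y => if x = y then q x else 0) f))
  rw [quantMI, ← hf, miBits_quantJoint_noiseless q hq hsum,
    div_lt_one (Real.log_pos one_lt_two)]
  exact Real.binEntropy_lt_log_two.2 (hne f)

/-- Remark 2: `P_X ↦ I(X;[Y]_M)` is not concave for the noiseless channel on three
symbols: both endpoint distributions achieve `I(X;[Y]_2) = 1`, yet every strict mixture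
achieves strictly less than `1`. -/
theorem quantMI_not_concave_in_input (α : ℝ) (hα0 : 0 < α) (hα1 : α < 1) :
    let joint : (Fin 3 → ℝ) → Fin 3 → Fin 3 → ℝ :=
      fun q x y => if x = y then q x else 0
    quantMI (joint ![1/2, 1/4, 1/4]) 2 = 1 ∧
    quantMI (joint ![1/4, 1/4, 1/2]) 2 = 1 ∧
    quantMI (joint ![(1 + α)/4, 1/4, (2 - α)/4]) 2 < 1 := by
  intro joint
  refine ⟨?_, ?_, ?_⟩
  · refine quantMI_noiseless_eq_one _ ?_ ?_ ![0, 1, 1] ?_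
    · simp [Fin.forall_fin_succ]
    · simp only [Fin.sum_univ_three, Matrix.cons_val]
      norm_num
    · simp only [levelZeroMass, Fin.sum_univ_three, Matrix.cons_val]
      norm_num
  · refine quantMI_noiseless_eq_one _ ?_ ?_ ![1, 1, 0] ?_
    · simp [Fin.forall_fin_succ]
    · simp only [Fin.sum_univ_three, Matrix.cons_val]
      norm_num
    · simp only [levelZeroMass, Fin.sum_univ_three, Matrix.cons_val]
      norm_num
  · refine quantMI_noiseless_lt_one _ ?_ ?_ ?_
    · simp only [Fin.forall_fin_succ]
      simp
      constructor <;> linarith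
    · simp [Fin.sum_univ_three]
      ring
    · intro f h
      simp only [levelZeroMass, Fin.sum_univ_three, Matrix.cons_val] at h
      -- Both outer atoms lie strictly between `1/4` and `1/2`, which excludes all eight subsets.
      split_ifs at h <;> linarith
end
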